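/- arXiv:2202.03431 — 3 statements merged into one kernel-verified Lean document; each statement's English description precedes it below -/
import Mathlib

section
/- There is no universal constant α such that τ(G) ≤ χ_ℓ(G) + α for every finite simple graph G; that is, for every real α there exists a finite simple graph G with τ(G) - χ_ℓ(G) > α. -/
/-- A proper coloring of the graph `G` from the list assignment `L` (colors are
natural numbers): every vertex gets a color from its list, and adjacent vertices
get different colors. -/
def IsProperListColoring {V : Type*} (G : SimpleGraph V) (L : V → Finset ℕ) (f : V → ℕ) : Prop :=
  (∀ v, f v ∈ L v) ∧ ∀ ⦃u w⦄, G.Adj u w → f u ≠ f w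

/-- `P(G, L)`: the number of proper `L`-colorings of `G`. -/
noncomputable def numListColorings {V : Type*} (G : SimpleGraph V) (L : V → Finset ℕ) : ℕ :=
  {f : V → ℕ | IsProperListColoring G L f}.ncard

/-- `P(G, m)`: the chromatic polynomial of `G` evaluated at `m`, i.e. the number of
proper colorings of `G` using colors from `{1, …, m}`. -/
noncomputable def chromPoly {V : Type*} (G : SimpleGraph V) (m : ℕ) : ℕ :=
  numListColorings G fun _ => Finset.Icc 1 m

/-- `L` is an `m`-assignment: every list has size `m`. -/
def IsAssignment {V : Type*} (L : V → Finset ℕ) (m : ℕ) : Prop :=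
  ∀ v, (L v).card = m

/-- `P_ℓ(G, m)`: the list color function, the minimum of `P(G, L)` over all
`m`-assignments `L` for `G`. -/
noncomputable def listColorFunction {V : Type*} (G : SimpleGraph V) (m : ℕ) : ℕ :=
  sInf {p | ∃ L : V → Finset ℕ, IsAssignment L m ∧ numListColorings G L = p}

/-- `χ(G)`: the chromatic number, the least `m` admitting a proper coloring with
colors from `{1, …, m}`. -/
noncomputable def chromNum {V : Type*} (G : SimpleGraph V) : ℕ :=
  sInf {m | 0 < chromPoly G m}

/-- `χ_ℓ(G)`: the list chromatic number, the least `k` such that `G` has a proper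
`L`-coloring for every `k`-assignment `L`. -/
noncomputable def listChromNum {V : Type*} (G : SimpleGraph V) : ℕ :=
  sInf {k | ∀ L : V → Finset ℕ, IsAssignment L k → ∃ f, IsProperListColoring G L f}

/-- `τ(G)`: the list color function threshold, the least `k ≥ χ(G)` such that
`P_ℓ(G, m) = P(G, m)` whenever `m ≥ k`. -/
noncomputable def lcfThreshold {V : Type*} (G : SimpleGraph V) : ℕ :=
  sInf {k | chromNum G ≤ k ∧ ∀ m, k ≤ m → listColorFunction G m = chromPoly G m}

/-- The complete bipartite graph `K_{2,l}`. -/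
def K2l (l : ℕ) : SimpleGraph (Fin 2 ⊕ Fin l) := completeBipartiteGraph (Fin 2) (Fin l)

open Finset in
theorem aux_count {V W : Type} [Fintype W] [DecidableEq W] (e : V ≃ Bool ⊕ W) (L : V → Finset ℕ) :
    numListColorings ((completeBipartiteGraph Bool W).comap e) L =
      ∑ p ∈ L (e.symm (Sum.inl true)) ×ˢ L (e.symm (Sum.inl false)),
        ∏ w, (L (e.symm (Sum.inr w)) \ {p.1, p.2}).card := by
  classical
  set S := (L (e.symm (Sum.inl true)) ×ˢ L (e.symm (Sum.inl false))).sigma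
    (fun p => Fintype.piFinset fun w => L (e.symm (Sum.inr w)) \ {p.1, p.2}) with hS
  let F : (Σ _ : ℕ × ℕ, W → ℕ) → V → ℕ := fun q v =>
    Sum.elim (fun b : Bool => if b then q.1.1 else q.1.2) q.2 (e v)
  have hF : Function.Injective F := by
    rintro ⟨⟨a, b⟩, g⟩ ⟨⟨a', b'⟩, g'⟩ h
    have h1 := congrFun h (e.symm (Sum.inl true))
    have h2 := congrFun h (e.symm (Sum.inl false))
    have h3 : g = g' := by
      funext w
      have := congrFun h (e.symm (Sum.inr w))
      simpa [F] using this
    simp [F] at h1 h2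
    subst h1 h2 h3
    rfl
  have himg : {f : V → ℕ | IsProperListColoring ((completeBipartiteGraph Bool W).comap e) L f}
      = F '' (S : Set _) := by
    ext f
    simp only [Set.mem_ofPred_eq, Set.mem_image, mem_coe]
    constructor
    · rintro ⟨h1, h2⟩
      refine ⟨⟨(f (e.symm (Sum.inl true)), f (e.symm (Sum.inl false))),
        fun w => f (e.symm (Sum.inr w))⟩, ?_, ?_⟩
      · simp only [hS, mem_sigma, mem_product, Fintype.mem_piFinset, mem_sdiff, mem_insert,
          mem_singleton, not_or]
        refine ⟨⟨h1 _, h1 _⟩, fun w => ⟨h1 _, ?_, ?_⟩⟩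
        · apply h2; simp
        · apply h2; simp
      · funext v
        obtain ⟨s, rfl⟩ := e.symm.surjective v
        rcases s with (_ | _) | w <;> simp [F]
    · rintro ⟨⟨⟨a, b⟩, g⟩, hq, rfl⟩
      simp only [hS, mem_sigma, mem_product, Fintype.mem_piFinset, mem_sdiff, mem_insert,
          mem_singleton, not_or] at hq
      obtain ⟨⟨ha, hb⟩, hg⟩ := hq
      constructor
      · intro v
        obtain ⟨s, rfl⟩ := e.symm.surjective v
        rcases s with (_ | _) | w
        · simpa [F] using hb
        · simpa [F] using ha
        · simpa [F] using (hg w).1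
      · intro u v huv
        obtain ⟨s, rfl⟩ := e.symm.surjective u
        obtain ⟨s', rfl⟩ := e.symm.surjective v
        rcases s with (_ | _) | w <;> rcases s' with (_ | _) | w' <;> simp [F] at huv ⊢
        · exact fun h => (hg w').2.2 h.symm
        · exact fun h => (hg w').2.1 h.symm
        · exact (hg w).2.2
        · exact (hg w).2.1
  unfold numListColorings
  rw [himg, Set.ncard_image_of_injective _ hF, Set.ncard_coe_finset, hS, card_sigma]
  simp [Fintype.card_piFinset]

open Finset in
theorem aux_prod {W : Type} (s : Finset W) (x : ℕ) (e : W → ℕ) :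
    x ^ s.card * (x + ∑ w ∈ s, e w) ≤ x * ∏ w ∈ s, (x + e w) := by
  classical
  induction s using Finset.induction_on with
  | empty => simp
  | insert a s ha ih =>
    rw [card_insert_of_notMem ha, sum_insert ha, prod_insert ha]
    calc x ^ (s.card + 1) * (x + (e a + ∑ w ∈ s, e w))
        ≤ (x + e a) * (x ^ s.card * (x + ∑ w ∈ s, e w)) := by
          have : 0 ≤ e a * x ^ s.card * ∑ w ∈ s, e w := Nat.zero_le _
          ring_nf at this ⊢
          omega
      _ ≤ (x + e a) * (x * ∏ w ∈ s, (x + e w)) := Nat.mul_le_mul_left _ ih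
      _ = _ := by ring

theorem aux_pow (x l : ℕ) (hx : 1 ≤ x) : x * (x + 1) ^ l ≤ x ^ l * (x + 3 ^ l) := by
  induction l with
  | zero => simp
  | succ l ih =>
    have h3 : 1 ≤ 3 ^ l := Nat.one_le_pow _ _ (by norm_num)
    calc x * (x + 1) ^ (l + 1) = (x + 1) * (x * (x + 1) ^ l) := by ring
      _ ≤ (x + 1) * (x ^ l * (x + 3 ^ l)) := Nat.mul_le_mul_left _ ih
      _ = x ^ l * ((x + 1) * (x + 3 ^ l)) := by ring
      _ ≤ x ^ l * (x * (x + 3 ^ (l + 1))) := by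
          apply Nat.mul_le_mul_left
          rw [pow_succ]
          nlinarith [Nat.mul_le_mul_left x h3, Nat.mul_le_mul_left (3 ^ l) hx]
      _ = _ := by ring

theorem aux_pow' (x l : ℕ) (hx : 3 ^ l ≤ x) :
    x * (x + 1) ^ l ≤ x ^ l * x + x ^ l * ((x + 1) * l) := by
  have h3 : 1 ≤ 3 ^ l := Nat.one_le_pow _ _ (by norm_num)
  rcases Nat.eq_zero_or_pos l with rfl | hl
  · simp
  · refine (aux_pow x l (by omega)).trans ?_
    rw [← mul_add]
    apply Nat.mul_le_mul_left
    nlinarith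

/-- indicator of non-membership -/
def auxInd (M : Finset ℕ) (a : ℕ) : ℕ := if a ∈ M then 0 else 1

open Finset in
theorem aux_card_ne (M : Finset ℕ) (x a b : ℕ) (hM : M.card = x + 2) (hab : a ≠ b) :
    (M \ {a, b}).card = x + (auxInd M a + auxInd M b) := by
  have h1 := card_sdiff_add_card_inter M {a, b}
  have : (M ∩ {a, b}).card + (auxInd M a + auxInd M b) = 2 := by
    unfold auxInd
    by_cases ha : a ∈ M <;> by_cases hb : b ∈ M
    · rw [inter_eq_right.2 (by simp [insert_subset_iff, ha, hb])]; simp [ha, hb, hab]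
    · have : M ∩ {a, b} = {a} := by ext z; simp; grind
      simp [this, ha, hb]
    · have : M ∩ {a, b} = {b} := by ext z; simp; grind
      simp [this, ha, hb]
    · have : M ∩ {a, b} = ∅ := by ext z; simp; grind
      simp [this, ha, hb]
  omega

open Finset in
theorem aux_sumInd (A B M : Finset ℕ) (x : ℕ) (hA : A.card = x + 2) (hB : B.card = x + 2)
    (hM : M.card = x + 2) :
    (x + 1) * (x + 2 - (A ∩ B).card) ≤
      ∑ p ∈ (A ×ˢ B).filter (fun p => p.1 ≠ p.2), (auxInd M p.1 + auxInd M p.2) := by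
  have hind : ∀ C : Finset ℕ, ∑ a ∈ C, auxInd M a = (C \ M).card := by
    intro C
    simp only [auxInd]
    rw [← card_filter_add_card_filter_not (s := C \ M) (fun _ => True)]
    simp [Finset.sum_ite, sdiff_eq_filter]
  have key : ∀ C D : Finset ℕ, D.card = x + 2 →
      (x + 1) * (C \ M).card ≤ ∑ a ∈ C, ∑ b ∈ D, if a ≠ b then auxInd M a else 0 := by
    intro C D hD
    rw [← hind, mul_sum]
    apply sum_le_sum
    intro a _
    rw [← sum_filter, sum_const, smul_eq_mul]
    apply Nat.mul_le_mul_right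
    have : D.erase a ⊆ D.filter (fun b => a ≠ b) := by
      intro b; simp; grind
    have h2 := card_le_card this
    have h3 := pred_card_le_card_erase (s := D) (a := a)
    omega
  have hk1 := key A B hB
  have hk2 := key B A hA
  rw [sum_filter, sum_product]
  have hsplit : ∑ a ∈ A, ∑ b ∈ B, (if a ≠ b then auxInd M a + auxInd M b else 0) =
      (∑ a ∈ A, ∑ b ∈ B, if a ≠ b then auxInd M a else 0) +
      (∑ b ∈ B, ∑ a ∈ A, if b ≠ a then auxInd M b else 0) := by
    rw [sum_comm (s := B), ← sum_add_distrib]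
    refine sum_congr rfl fun a _ => ?_
    rw [← sum_add_distrib]
    refine sum_congr rfl fun b _ => ?_
    by_cases h : a = b
    · simp [h]
    · have : b ≠ a := fun h' => h h'.symm
      simp [h, this]
  simp only [] at *
  rw [hsplit]
  refine le_trans ?_ (add_le_add hk1 hk2)
  rw [← mul_add]
  apply Nat.mul_le_mul_left
  have e1 := card_sdiff_add_card_inter A M
  have e2 := card_sdiff_add_card_inter B M
  have e3 := card_union_add_card_inter (A ∩ M) (B ∩ M)
  have e4 : ((A ∩ M) ∪ (B ∩ M)).card ≤ M.card := card_le_card (by grind)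
  have e5 : ((A ∩ M) ∩ (B ∩ M)).card ≤ (A ∩ B).card := card_le_card (by grind)
  omega

open Finset in
theorem aux_diag (A B : Finset ℕ) :
    ((A ×ˢ B).filter (fun p => p.1 = p.2)).card = (A ∩ B).card := by
  symm
  apply card_bij (fun a _ => (a, a))
  · simp +contextual
  · simp +contextual
  · rintro ⟨a, b⟩ h
    simp at h
    obtain ⟨⟨h1, h2⟩, rfl⟩ := h
    exact ⟨a, by simp [h1, h2], rfl⟩

open Finset in
theorem aux_lower {W : Type} [Fintype W] (A B : Finset ℕ) (M : W → Finset ℕ) (x : ℕ)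
    (hA : A.card = x + 2) (hB : B.card = x + 2) (hM : ∀ w, (M w).card = x + 2)
    (hx : 3 ^ Fintype.card W ≤ x) :
    (x + 2) * (x + 1) ^ Fintype.card W + (x + 2) * (x + 1) * x ^ Fintype.card W ≤
      ∑ p ∈ A ×ˢ B, ∏ w, (M w \ {p.1, p.2}).card := by
  set l := Fintype.card W with hl
  have h3 : 1 ≤ 3 ^ l := Nat.one_le_pow _ _ (by norm_num)
  have hdiag := aux_diag A B
  set c := (A ∩ B).card with hc
  have hcard := card_filter_add_card_filter_not (s := A ×ˢ B) (fun p => p.1 = p.2)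
  rw [hdiag, card_product, hA, hB] at hcard
  have hcm : c ≤ x + 2 := hA ▸ card_le_card inter_subset_left
  obtain ⟨d, hd⟩ := Nat.exists_eq_add_of_le hcm
  rw [← sum_filter_add_sum_filter_not (A ×ˢ B) (fun p => p.1 = p.2)]
  have hS1 : c * (x + 1) ^ l ≤ ∑ p ∈ (A ×ˢ B).filter (fun p => p.1 = p.2),
      ∏ w, (M w \ {p.1, p.2}).card := by
    rw [← hdiag, ← smul_eq_mul]
    apply card_nsmul_le_sum
    intro p hp
    have hp' : p.1 = p.2 := (mem_filter.1 hp).2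
    rw [hl, ← card_univ]
    apply pow_card_le_prod
    intro w _
    have := le_card_sdiff ({p.1, p.2} : Finset ℕ) (M w)
    rw [hM] at this
    simp only [hp', pair_eq_singleton, card_singleton] at this ⊢
    omega
  have hS2 : (((A ×ˢ B).filter (fun p => ¬ p.1 = p.2)).card) * (x ^ l * x)
      + x ^ l * (l * ((x + 1) * d)) ≤
      x * ∑ p ∈ (A ×ˢ B).filter (fun p => ¬ p.1 = p.2), ∏ w, (M w \ {p.1, p.2}).card := by
    calc _ ≤ ∑ p ∈ (A ×ˢ B).filter (fun p => ¬ p.1 = p.2),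
          x ^ l * (x + ∑ w, (auxInd (M w) p.1 + auxInd (M w) p.2)) := by
          simp only [mul_add (x ^ l)]
          rw [sum_add_distrib, sum_const, smul_eq_mul, ← mul_sum, sum_comm]
          apply Nat.add_le_add_left
          apply Nat.mul_le_mul_left
          rw [hl, ← card_univ, ← smul_eq_mul]
          apply card_nsmul_le_sum
          intro w _
          have := aux_sumInd A B (M w) x hA hB (hM w)
          rwa [← hc, hd, Nat.add_sub_cancel_left] at this
      _ ≤ _ := by
          rw [mul_sum]
          apply sum_le_sum
          intro p hp
          have hp' : p.1 ≠ p.2 := (mem_filter.1 hp).2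
          have := aux_prod univ x (fun w => auxInd (M w) p.1 + auxInd (M w) p.2)
          rw [card_univ, ← hl] at this
          refine this.trans (le_of_eq ?_)
          congr 1
          refine prod_congr rfl fun w _ => ?_
          rw [aux_card_ne (M w) x _ _ (hM w) hp']
  have hn : ((A ×ˢ B).filter (fun p => ¬ p.1 = p.2)).card = (x + 2) * (x + 1) + d := by
    have : (x + 2) * (x + 2) = (x + 2) * (x + 1) + (x + 2) := by ring
    omega
  rw [hn] at hS2
  have hp := Nat.mul_le_mul_left d (aux_pow' x l hx)
  have hS1' := Nat.mul_le_mul_left x hS1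
  have hx0 : 0 < x := by omega
  apply Nat.le_of_mul_le_mul_left _ hx0
  generalize (∑ p ∈ (A ×ˢ B).filter (fun p => p.1 = p.2), ∏ w, (M w \ {p.1, p.2}).card) = T1 at *
  generalize (∑ p ∈ (A ×ˢ B).filter (fun p => ¬ p.1 = p.2), ∏ w, (M w \ {p.1, p.2}).card) = T2 at *
  have e : x * ((x + 2) * (x + 1) ^ l + (x + 2) * (x + 1) * x ^ l)
     = x * (c * (x + 1) ^ l) + d * (x * (x + 1) ^ l) + (x + 2) * (x + 1) * x ^ l * x := by
    have : x * ((x + 2) * (x + 1) ^ l) = x * ((c + d) * (x + 1) ^ l) := by rw [← hd]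
    rw [mul_add, this]; ring
  rw [e]
  have e2 : ((x + 2) * (x + 1) + d) * (x ^ l * x) + x ^ l * (l * ((x + 1) * d)) =
    d * (x ^ l * x + x ^ l * ((x + 1) * l)) + (x + 2) * (x + 1) * x ^ l * x := by ring
  rw [e2] at hS2
  rw [mul_add x T1 T2]
  linarith

open Finset in
theorem aux_chrom {V W : Type} [Fintype W] [DecidableEq W] (e : V ≃ Bool ⊕ W) (x : ℕ) :
    chromPoly ((completeBipartiteGraph Bool W).comap e) (x + 2) =
      (x + 2) * (x + 1) ^ Fintype.card W + (x + 2) * (x + 1) * x ^ Fintype.card W := by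
  unfold chromPoly
  rw [aux_count]
  set A := Icc 1 (x + 2) with hA
  have hAc : A.card = x + 2 := by simp [hA]
  have hdiag := aux_diag A A
  have hcard := card_filter_add_card_filter_not (s := A ×ˢ A) (fun p => p.1 = p.2)
  rw [hdiag, card_product, inter_self, hAc] at hcard
  rw [inter_self, hAc] at hdiag
  have hn : ((A ×ˢ A).filter (fun p => ¬ p.1 = p.2)).card = (x + 2) * (x + 1) := by
    have : (x + 2) * (x + 2) = (x + 2) * (x + 1) + (x + 2) := by ring
    omega
  rw [← sum_filter_add_sum_filter_not (A ×ˢ A) (fun p => p.1 = p.2)]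
  congr 1
  · rw [← hdiag, ← smul_eq_mul, ← sum_const]
    refine sum_congr rfl fun p hp => ?_
    obtain ⟨h1, h2⟩ := mem_filter.1 hp
    have h3 := (mem_product.1 h1).2
    rw [prod_const, card_univ, h2, pair_eq_singleton, card_sdiff_of_subset (by simpa using h3), hAc]
    simp
  · rw [← hn, ← smul_eq_mul, ← sum_const]
    refine sum_congr rfl fun p hp => ?_
    obtain ⟨h1, h2⟩ := mem_filter.1 hp
    have h3 := (mem_product.1 h1)
    rw [prod_const, card_univ, aux_card_ne A x _ _ hAc h2]
    simp [auxInd, h3.1, h3.2]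

open Finset in
theorem aux_listChrom {V W : Type} [Fintype W] [DecidableEq W] (e : V ≃ Bool ⊕ W) :
    listChromNum ((completeBipartiteGraph Bool W).comap e) ≤ 3 := by
  apply Nat.sInf_le
  intro L hL
  have hpos : 0 < numListColorings ((completeBipartiteGraph Bool W).comap e) L := by
    rw [aux_count]
    apply sum_pos
    · intro p _
      apply prod_pos
      intro w _
      have h1 := le_card_sdiff ({p.1, p.2} : Finset ℕ) (L (e.symm (Sum.inr w)))
      have h2 := card_le_two (a := p.1) (b := p.2)
      have h3 := hL (e.symm (Sum.inr w))
      omega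
    · rw [← card_pos, card_product, hL, hL]; norm_num
  exact Set.nonempty_of_ncard_ne_zero hpos.ne'

open Finset in
theorem aux_eventually {V W : Type} [Fintype W] [DecidableEq W] (e : V ≃ Bool ⊕ W) (m : ℕ)
    (hm : 3 ^ Fintype.card W + 2 ≤ m) :
    listColorFunction ((completeBipartiteGraph Bool W).comap e) m =
      chromPoly ((completeBipartiteGraph Bool W).comap e) m := by
  obtain ⟨x, rfl⟩ : ∃ x, m = x + 2 := ⟨m - 2, by have := Nat.zero_le (3 ^ Fintype.card W); generalize 3 ^ Fintype.card W = z at *; omega⟩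
  apply le_antisymm
  · apply Nat.sInf_le
    exact ⟨_, fun v => by simp, rfl⟩
  · apply le_csInf
    · exact ⟨_, _, fun v => (by simp : (Icc 1 (x + 2)).card = x + 2), rfl⟩
    · rintro p ⟨L, hL, rfl⟩
      rw [aux_chrom, aux_count]
      exact aux_lower _ _ _ x (hL _) (hL _) (fun w => hL _) (by omega)

/-- half block `i` of the block starting at `s` -/
def auxBlk (k s : ℕ) (i : Bool) : Finset ℕ :=
  if i then Finset.Ico s (s + k) else Finset.Ico (s + k) (s + 2 * k)

open Finset in
theorem aux_bad {V : Type} (k t : ℕ) (hk : 1 ≤ k)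
    (ht : 2 * k * (2 * k * (2 * k - 2)) ^ t < (2 * k - 1) ^ (2 * t))
    (e : V ≃ Bool ⊕ ((Bool × Bool) × Fin t)) :
    listColorFunction ((completeBipartiteGraph Bool _).comap e) (2 * k) <
      chromPoly ((completeBipartiteGraph Bool _).comap e) (2 * k) := by
  obtain ⟨y, rfl⟩ : ∃ y, k = y + 1 := ⟨k - 1, by omega⟩
  set x := 2 * y with hx
  have hxx : 2 * (y + 1) = x + 2 := by omega
  rw [hxx] at ht ⊢
  simp only [Nat.add_sub_cancel] at ht
  have hm1 : x + 2 - 1 = x + 1 := by omega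
  rw [hm1] at ht
  rw [aux_chrom]
  let L : V → Finset ℕ := fun v => Sum.elim
    (fun b : Bool => if b then Ico 0 (x + 2) else Ico (x + 2) (2 * (x + 2)))
    (fun w : (Bool × Bool) × Fin t => auxBlk (y + 1) 0 w.1.1 ∪ auxBlk (y + 1) (x + 2) w.1.2) (e v)
  have hL : IsAssignment L (x + 2) := by
    intro v
    obtain ⟨s, rfl⟩ := e.symm.surjective v
    rcases s with (_ | _) | ⟨⟨i, j⟩, w⟩
    · simp [L]; omega
    · simp [L]
    · simp only [L, Equiv.apply_symm_apply, Sum.elim_inr]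
      rw [card_union_of_disjoint]
      · cases i <;> cases j <;> simp [auxBlk] <;> omega
      · rw [disjoint_left]
        intro a
        cases i <;> cases j <;> simp [auxBlk] <;> omega
  refine lt_of_le_of_lt (Nat.sInf_le ⟨L, hL, rfl⟩) ?_
  rw [aux_count]
  have hterm : ∀ p ∈ L (e.symm (Sum.inl true)) ×ˢ L (e.symm (Sum.inl false)),
      ∏ w, (L (e.symm (Sum.inr w)) \ {p.1, p.2}).card
        = ((x + 2) * x) ^ t * (x + 1) ^ (2 * t) := by
    rintro ⟨a, b⟩ hp
    simp [L] at hp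
    obtain ⟨ha, hb1, hb2⟩ := hp
    have hab : a ≠ b := by omega
    have h1 : ∀ w, (L (e.symm (Sum.inr w)) \ {a, b}).card =
      x + (auxInd (L (e.symm (Sum.inr w))) a + auxInd (L (e.symm (Sum.inr w))) b) :=
      fun w => aux_card_ne _ x a b (hL _) hab
    have h2 : ∀ (i j : Bool) (w : Fin t), (L (e.symm (Sum.inr ((i, j), w))) \ {a, b}).card =
       x + ((if (a < y + 1 ↔ i = true) then 0 else 1)
        + (if (b < x + 2 + (y + 1) ↔ j = true) then 0 else 1)) := by
      intro i j w
      rw [h1]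
      simp only [L, Equiv.apply_symm_apply, Sum.elim_inr, auxInd]
      congr 2
      · congr 1
        cases i <;> cases j <;> simp [auxBlk] <;> omega
      · congr 1
        cases i <;> cases j <;> simp [auxBlk] <;> omega
    rw [Fintype.prod_prod_type]
    simp only [Fintype.prod_prod_type, h2, prod_const, card_univ, Fintype.card_fin,
      Fintype.prod_bool]
    by_cases c1 : a < y + 1 <;> by_cases c2 : b < x + 2 + (y + 1) <;> simp [c1, c2] <;> rw [mul_pow (x + 2) x] <;> ring
  rw [sum_congr rfl hterm, sum_const, card_product, hL, hL, smul_eq_mul]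
  have hcard : Fintype.card ((Bool × Bool) × Fin t) = 4 * t := by simp
  rw [hcard]
  refine lt_of_lt_of_le ?_ (Nat.le_add_right _ _)
  have : (x + 1) ^ (4 * t) = (x + 1) ^ (2 * t) * (x + 1) ^ (2 * t) := by rw [← pow_add]; congr 1; omega
  rw [this, mul_assoc]
  apply Nat.mul_lt_mul_of_pos_left _ (by omega)
  rw [← mul_assoc]
  exact Nat.mul_lt_mul_of_pos_right ht (by positivity)

theorem aux_t (k : ℕ) (hk : 1 ≤ k) :
    ∃ t, 2 * k * (2 * k * (2 * k - 2)) ^ t < (2 * k - 1) ^ (2 * t) := by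
  obtain ⟨y, rfl⟩ : ∃ y, k = y + 1 := ⟨k - 1, by omega⟩
  have h1 : 2 * (y + 1) - 2 = 2 * y := by omega
  have h2 : 2 * (y + 1) - 1 = 2 * y + 1 := by omega
  rw [h1, h2]
  set N := 2 * (y + 1) * (2 * y) with hN
  have h3 : (2 * y + 1) ^ 2 = N + 1 := by rw [hN]; ring
  refine ⟨2 * (y + 1) * (N + 1), ?_⟩
  rw [pow_mul (2 * y + 1), h3]
  set t := 2 * (y + 1) * (N + 1) with ht
  have hb := aux_prod (Finset.range t) N (fun _ => 1)
  simp only [Finset.card_range, Finset.sum_const, Finset.prod_const, smul_eq_mul, mul_one] at hb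
  rcases Nat.eq_zero_or_pos N with h0 | hpos
  · rw [h0, zero_pow (by positivity)]; simp
  · apply Nat.lt_of_mul_lt_mul_left (a := N)
    refine lt_of_lt_of_le ?_ hb
    have : 0 < N ^ t := by positivity
    calc N * (2 * (y + 1) * N ^ t) = N ^ t * (2 * (y + 1) * N) := by ring
      _ < N ^ t * (N + t) := by
        apply Nat.mul_lt_mul_of_pos_left _ this
        rw [ht]; nlinarith

/-- There is no universal constant `α` with `τ(G) ≤ χ_ℓ(G) + α` for every finite
simple graph `G`: for every real `α` there is a finite simple graph `G` with
`τ(G) - χ_ℓ(G) > α`. -/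
theorem no_universal_constant_lcfThreshold_sub_listChromNum :
    ∀ α : ℝ, ∃ (n : ℕ) (G : SimpleGraph (Fin n)),
      (lcfThreshold G : ℝ) - (listChromNum G : ℝ) > α := by
  intro α
  obtain ⟨N, hN⟩ := exists_nat_gt α
  obtain ⟨t, ht⟩ := aux_t (N + 3) (by omega)
  let e := (Fintype.equivFin (Bool ⊕ ((Bool × Bool) × Fin t))).symm
  refine ⟨_, (completeBipartiteGraph Bool _).comap e, ?_⟩
  have h1 := aux_listChrom e
  have h2 := aux_bad (N + 3) t (by omega) ht e
  set G := (completeBipartiteGraph Bool ((Bool × Bool) × Fin t)).comap e with hG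
  have h3 : lcfThreshold G ∈ {k | chromNum G ≤ k ∧ ∀ m, k ≤ m →
      listColorFunction G m = chromPoly G m} := by
    apply Nat.sInf_mem
    refine ⟨max (chromNum G) (3 ^ Fintype.card ((Bool × Bool) × Fin t) + 2), le_max_left _ _, ?_⟩
    intro m hm
    exact aux_eventually e m ((le_max_right _ _).trans hm)
  have h4 : 2 * (N + 3) < lcfThreshold G := by
    by_contra hcon
    exact h2.ne (h3.2 _ (not_lt.1 hcon))
  have h5 : N + listChromNum G ≤ lcfThreshold G := by omega
  have h6 : (N : ℝ) + listChromNum G ≤ lcfThreshold G := by exact_mod_cast h5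
  linarith
end

section
/- Let n, m, t ∈ ℕ with n ≥ 2 and m ≥ n + 1, and let G = K_{n, n^n t} with bipartition X = {x_1, …, x_n}, Y = {y_1, …, y_{n^n t}}. Let S_k = {m + n(k−2) + ℓ : ℓ ∈ [n]} for each k ∈ [n], and let A = {{s_1, …, s_n} : s_k ∈ S_k for each k ∈ [n]}, enumerated as A = {A_0, …, A_{n^n − 1}}. Let L be the m-assignment for G defined by L(x_k) = [m−n] ∪ S_k for each k ∈ [n] and L(y_k) = [m−n] ∪ A_{⌊(k−1)/t⌋} for each k ∈ [n^n t]. Then P(G, L) = n^n · ∏_{i=0}^{n} (m−i)^{t·C(n,i)·(n−1)^{n−i}} + Σ_{N=1}^{n} Σ_{S=0}^{n−N} [ n^S · C(n,S) · C(m−n,N) · ( Σ_{i=0}^{N−1} (−1)^i · C(N,i) · (N−i)^{n−S} ) · ∏_{i=0}^{S} (m−N−i)^{t·C(S,i)·(n−1)^{S−i}·n^{n−S}} ], where C(a,b) denotes the binomial coefficient (interpreted as 0 when a < b). -/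
/-- The complete bipartite graph `K_{n,l}`. -/
def Knl (n l : ℕ) : SimpleGraph (Fin n ⊕ Fin l) := completeBipartiteGraph (Fin n) (Fin l)

/-- `S_k = {m + n(k-2) + ℓ : ℓ ∈ [n]}` (written as `{(m-n) + n(k-1) + ℓ : ℓ ∈ [n]}`,
which is the same set for `k ≥ 1` and `m ≥ n`). -/
def Sset (n m k : ℕ) : Finset ℕ :=
  (Finset.Icc 1 n).image fun ℓ => (m - n) + n * (k - 1) + ℓ

/-- `A`, the collection of all transversals `{s_1, …, s_n}` with `s_k ∈ S_k` for each
`k ∈ [n]`. -/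
def transversalFamily (n m : ℕ) : Set (Finset ℕ) :=
  {T | ∃ s : Fin n → ℕ, (∀ k : Fin n, s k ∈ Sset n m (k.val + 1)) ∧ T = Finset.image s Finset.univ}

section helpers
open Finset

variable {p n : ℕ}

def xcol (p n : ℕ) (k : Fin n) (a : Fin p ⊕ Fin n) : ℕ :=
  Sum.elim (fun c : Fin p => c.val + 1) (fun l : Fin n => p + n * k.val + l.val + 1) a

def lset (g : Fin n → Fin p ⊕ Fin n) : Finset (Fin p) := univ.filter fun c => ∃ k, g k = Sum.inl c
def rset (g : Fin n → Fin p ⊕ Fin n) : Finset (Fin n) := univ.filter fun k => ∃ l, g k = Sum.inr l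
def mset (g : Fin n → Fin p ⊕ Fin n) (s : Fin n → Fin n) : Finset (Fin n) :=
  univ.filter fun k => g k = Sum.inr (s k)

theorem xcol_inr_inj {k k' l l' : Fin n}
    (h : xcol p n k (Sum.inr l) = xcol p n k' (Sum.inr l')) : k = k' ∧ l = l' := by
  simp only [xcol, Sum.elim_inr] at h
  have h1 : n * k.val + l.val = n * k'.val + l'.val := by omega
  have hn : 0 < n := by have := k.isLt; omega
  have h2 : k.val = k'.val := by
    have := congrArg (· / n) h1
    simpa [Nat.mul_add_div hn, Nat.div_eq_of_lt l.isLt, Nat.div_eq_of_lt l'.isLt] using this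
  rw [h2] at h1
  exact ⟨Fin.ext h2, Fin.ext (by omega)⟩

theorem xcol_inj (k : Fin n) : Function.Injective (xcol p n k) := by
  rintro (a | a) (b | b) h
  · simp only [xcol, Sum.elim_inl] at h
    congr 1; ext; omega
  · simp only [xcol, Sum.elim_inl, Sum.elim_inr] at h
    have := a.isLt; omega
  · simp only [xcol, Sum.elim_inl, Sum.elim_inr] at h
    have := b.isLt; omega
  · rw [(xcol_inr_inj h).2]

def trv (p n : ℕ) (s : Fin n → Fin n) : Finset ℕ := univ.image fun k => xcol p n k (Sum.inr (s k))

theorem trv_inj : Function.Injective (trv p n) := by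
  intro s s' h
  funext k
  have : xcol p n k (Sum.inr (s k)) ∈ trv p n s' := by
    rw [← h]; exact mem_image_of_mem _ (mem_univ k)
  obtain ⟨k', -, h'⟩ := mem_image.1 this
  obtain ⟨rfl, h2⟩ := xcol_inr_inj h'
  exact h2.symm

theorem mem_Sset' {m : ℕ} (hp : m - n = p) (k : Fin n) (x : ℕ) :
    x ∈ Sset n m (k.val + 1) ↔ ∃ l : Fin n, xcol p n k (Sum.inr l) = x := by
  simp only [Sset, mem_image, mem_Icc, xcol, Sum.elim_inr, hp, Nat.add_sub_cancel]
  constructor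
  · rintro ⟨l, hl, rfl⟩
    exact ⟨⟨l - 1, by omega⟩, by simp only; omega⟩
  · rintro ⟨l, rfl⟩
    exact ⟨l.val + 1, by omega, by omega⟩

theorem mem_Icc' (x : ℕ) (k : Fin n) :
    x ∈ Icc 1 p ↔ ∃ c : Fin p, xcol p n k (Sum.inl c) = x := by
  simp only [mem_Icc, xcol, Sum.elim_inl]
  constructor
  · intro hl
    exact ⟨⟨x - 1, by omega⟩, by simp only; omega⟩
  · rintro ⟨l, rfl⟩
    omega

theorem mem_family {m : ℕ} (hp : m - n = p) (T : Finset ℕ) :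
    T ∈ transversalFamily n m ↔ ∃ s, trv p n s = T := by
  simp only [transversalFamily, Set.mem_ofPred_eq, mem_Sset' hp]
  constructor
  · rintro ⟨s, hs, rfl⟩
    choose l hl using hs
    exact ⟨l, by simp only [trv, hl]⟩
  · rintro ⟨s, rfl⟩
    exact ⟨_, fun k => ⟨s k, rfl⟩, rfl⟩

theorem card_avail (g : Fin n → Fin p ⊕ Fin n) (s : Fin n → Fin n) :
    (((Icc 1 p ∪ trv p n s) \ univ.image fun k => xcol p n k (g k)).card : ℤ) =
      (p : ℤ) + n - (lset g).card - (mset g s).card := by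
  have hd : Disjoint (Icc 1 p) (trv p n s) := by
    rw [Finset.disjoint_left]
    intro x hx hx'
    obtain ⟨k, -, rfl⟩ := mem_image.1 hx'
    simp [xcol] at hx
    omega
  have hc : (trv p n s).card = n := by
    rw [trv, card_image_of_injective]
    · simp
    · intro a b h; exact (xcol_inr_inj h).1
  have hA : Icc 1 p ∩ (univ.image fun k => xcol p n k (g k)) =
      (lset g).image fun c => c.val + 1 := by
    ext x
    simp only [mem_inter, mem_image, mem_univ, true_and, lset, mem_filter]
    constructor
    · rintro ⟨hx, k, rfl⟩
      rcases hg : g k with c | l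
      · exact ⟨c, ⟨k, hg⟩, by simp [xcol]⟩
      · rw [hg] at hx; simp [xcol] at hx; omega
    · rintro ⟨c, ⟨k, hk⟩, rfl⟩
      refine ⟨by simp, k, by simp [hk, xcol]⟩
  have hB : trv p n s ∩ (univ.image fun k => xcol p n k (g k)) =
      (mset g s).image fun k => xcol p n k (Sum.inr (s k)) := by
    ext x
    simp only [mem_inter, mem_image, mem_univ, true_and, mset, mem_filter, trv]
    constructor
    · rintro ⟨⟨k', rfl⟩, k, hk⟩
      rcases hg : g k with c | l
      · rw [hg] at hk; simp [xcol] at hk; omega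
      · rw [hg] at hk
        obtain ⟨rfl, rfl⟩ := xcol_inr_inj hk
        exact ⟨k, hg, rfl⟩
    · rintro ⟨k, hk, rfl⟩
      exact ⟨⟨k, rfl⟩, k, by rw [hk]⟩
  have hcA : ((lset g).image fun c => c.val + 1).card = (lset g).card :=
    card_image_of_injective _ (by intro a b h; ext; simpa using h)
  have hcB : ((mset g s).image fun k => xcol p n k (Sum.inr (s k))).card = (mset g s).card :=
    card_image_of_injective _ (by intro a b h; exact (xcol_inr_inj h).1)
  rw [union_sdiff_distrib, card_union_of_disjoint
    (hd.mono sdiff_subset sdiff_subset)]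
  have e1 := card_sdiff_add_card_inter (Icc 1 p) (univ.image fun k => xcol p n k (g k))
  have e2 := card_sdiff_add_card_inter (trv p n s) (univ.image fun k => xcol p n k (g k))
  rw [hA, hcA, Nat.card_Icc] at e1
  rw [hB, hcB, hc] at e2
  push_cast
  omega

theorem prod_div (F : ℕ → ℤ) (a t : ℕ) (ht : 1 ≤ t) :
    ∏ j : Fin (a * t), F (j.val / t) = ∏ i ∈ range a, F i ^ t := by
  rw [Fin.prod_univ_eq_prod_range (fun j => F (j / t))]
  induction a with
  | zero => simp
  | succ a ih =>
    rw [Nat.succ_mul, prod_range_add, ih, prod_range_succ]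
    congr 1
    rw [prod_congr rfl (g := fun _ => F a)]
    · simp
    · intro i hi
      rw [mul_comm, Nat.mul_add_div ht, Nat.div_eq_of_lt (mem_range.1 hi), add_zero]

theorem step1 (m t : ℕ) (hp : m - n = p) (ht : 1 ≤ t)
    (A : ℕ → Finset ℕ)
    (hAinj : Set.InjOn A (Set.Iio (n ^ n)))
    (hAmem : ∀ j < n ^ n, A j ∈ transversalFamily n m)
    (hAsurj : ∀ T ∈ transversalFamily n m, ∃ j < n ^ n, A j = T)
    (L : Fin n ⊕ Fin (n ^ n * t) → Finset ℕ)
    (hLx : ∀ k : Fin n, L (Sum.inl k) = Finset.Icc 1 (m - n) ∪ Sset n m (k.val + 1))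
    (hLy : ∀ j : Fin (n ^ n * t), L (Sum.inr j) = Finset.Icc 1 (m - n) ∪ A (j.val / t)) :
    (numListColorings (Knl n (n ^ n * t)) L : ℤ) =
      ∑ g : Fin n → Fin p ⊕ Fin n, ∏ s : Fin n → Fin n,
        ((p : ℤ) + n - (lset g).card - (mset g s).card) ^ t := by
  classical
  let W := (univ : Finset (Fin n → Fin p ⊕ Fin n)).sigma fun g =>
    Fintype.piFinset fun j : Fin (n ^ n * t) =>
      L (Sum.inr j) \ univ.image fun k => xcol p n k (g k)
  let Φ : (Σ _ : Fin n → Fin p ⊕ Fin n, (Fin (n ^ n * t) → ℕ)) → (Fin n ⊕ Fin (n ^ n * t) → ℕ) :=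
    fun q => Sum.elim (fun k => xcol p n k (q.1 k)) q.2
  have hΦ : Function.Injective Φ := by
    rintro ⟨g, h⟩ ⟨g', h'⟩ e
    have e1 : ∀ k, xcol p n k (g k) = xcol p n k (g' k) := fun k => congrFun e (Sum.inl k)
    have e2 : h = h' := funext fun j => congrFun e (Sum.inr j)
    obtain rfl : g = g' := by
      funext k; exact xcol_inj k (e1 k)
    rw [e2]
  have hset : {f | IsProperListColoring (Knl n (n ^ n * t)) L f} = Φ '' (W : Set _) := by
    ext f
    simp only [Set.mem_ofPred_eq, Set.mem_image, W, mem_coe, mem_sigma, mem_univ, true_and,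
      Fintype.mem_piFinset, mem_sdiff, mem_image, not_exists, IsProperListColoring]
    constructor
    · rintro ⟨h1, h2⟩
      have : ∀ k : Fin n, ∃ a, xcol p n k a = f (Sum.inl k) := by
        intro k
        have := h1 (Sum.inl k)
        rw [hLx, hp, mem_union, mem_Sset' hp, mem_Icc' _ k] at this
        rcases this with ⟨c, hc⟩ | ⟨c, hc⟩
        · exact ⟨_, hc⟩
        · exact ⟨_, hc⟩
      choose g hg using this
      refine ⟨⟨g, fun j => f (Sum.inr j)⟩, fun j => ⟨h1 _, fun k => ?_⟩, ?_⟩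
      · simp only [hg]
        exact h2 (by simp [Knl, completeBipartiteGraph])
      · funext v
        rcases v with k | j
        · simp [Φ, hg]
        · simp [Φ]
    · rintro ⟨⟨g, h⟩, hq, rfl⟩
      constructor
      · rintro (k | j)
        · simp only [Φ, Sum.elim_inl]
          rw [hLx, hp, mem_union, mem_Sset' hp, mem_Icc' _ k]
          rcases g k with c | c
          · exact Or.inl ⟨c, rfl⟩
          · exact Or.inr ⟨c, rfl⟩
        · exact (hq j).1
      · rintro (k | j) (k' | j') hadj
        · simp [Knl, completeBipartiteGraph] at hadj
        · exact (hq j').2 k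
        · exact fun e => (hq j).2 k' e.symm
        · simp [Knl, completeBipartiteGraph] at hadj
  rw [numListColorings, hset, Set.ncard_image_of_injective _ hΦ, Set.ncard_coe_finset, card_sigma]
  push_cast
  refine sum_congr rfl fun g _ => ?_
  rw [Fintype.card_piFinset]
  push_cast
  simp only [hLy, hp]
  rw [prod_div (fun i => (((Icc 1 p ∪ A i) \ univ.image fun k => xcol p n k (g k)).card : ℤ)) _ _ ht]
  symm
  simp only [← card_avail]
  have key : (range (n ^ n)).image A = univ.image (trv p n) := by
    ext T
    simp only [mem_image, mem_range, mem_univ, true_and]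
    rw [← mem_family hp]
    constructor
    · rintro ⟨j, hj, rfl⟩; exact hAmem j hj
    · intro h; exact hAsurj T h
  have e1 := prod_image (s := (univ : Finset (Fin n → Fin n))) (g := trv p n)
    (f := fun T => (((Icc 1 p ∪ T) \ univ.image fun k => xcol p n k (g k)).card : ℤ) ^ t)
    (trv_inj.injOn)
  have e2 := prod_image (s := range (n ^ n)) (g := A)
    (f := fun T => (((Icc 1 p ∪ T) \ univ.image fun k => xcol p n k (g k)).card : ℤ) ^ t)
    (by intro a ha b hb h; exact hAinj (by simpa using ha) (by simpa using hb) h)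
  rw [← e1, ← key, e2]

theorem card_match (g : Fin n → Fin p ⊕ Fin n) (i : ℕ) :
    (univ.filter fun s : Fin n → Fin n => (mset g s).card = i).card =
      (rset g).card.choose i * (n - 1) ^ ((rset g).card - i) * n ^ (n - (rset g).card) := by
  classical
  have hsub : ∀ s, mset g s ⊆ rset g := by
    intro s k hk
    simp only [mset, rset, mem_filter, mem_univ, true_and] at *
    exact ⟨_, hk⟩
  have h1 : ∀ B ∈ (rset g).powersetCard i,
      ((univ.filter fun s : Fin n → Fin n => (mset g s).card = i).filter
        fun s => mset g s = B).card = (n - 1) ^ ((rset g).card - i) * n ^ (n - (rset g).card) := by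
    intro B hB
    obtain ⟨hB1, hB2⟩ := mem_powersetCard.1 hB
    have : ((univ.filter fun s : Fin n → Fin n => (mset g s).card = i).filter
        fun s => mset g s = B) = Fintype.piFinset fun k => univ.filter fun l =>
          (g k = Sum.inr l ↔ k ∈ B) := by
      ext s
      simp only [mem_filter, mem_univ, true_and, Fintype.mem_piFinset]
      constructor
      · rintro ⟨-, rfl⟩ k
        simp [mset]
      · intro h
        have : mset g s = B := by
          ext k; simp [mset, h]
        exact ⟨by rw [this, hB2], this⟩
    rw [this, Fintype.card_piFinset]
    have hk : ∀ k : Fin n, (univ.filter fun l => (g k = Sum.inr l ↔ k ∈ B)).card =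
        if k ∈ B then 1 else if k ∈ rset g then n - 1 else n := by
      intro k
      by_cases hkB : k ∈ B
      · have := hB1 hkB
        simp only [rset, mem_filter, mem_univ, true_and] at this
        obtain ⟨l, hl⟩ := this
        simp [hkB, hl, filter_eq]
      · by_cases hkr : k ∈ rset g
        · have h := hkr
          simp only [rset, mem_filter, mem_univ, true_and] at h
          obtain ⟨l, hl⟩ := h
          simp only [hkB, hkr, hl, if_true, if_false, iff_false, Sum.inr.injEq]
          rw [filter_ne]
          simp
        · have h := hkr
          simp only [rset, mem_filter, mem_univ, true_and, not_exists] at h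
          simp [hkB, hkr, h]
    simp only [hk]
    rw [prod_ite, prod_ite]
    simp only [prod_const, one_pow, one_mul]
    have c1 : ((univ.filter fun k => k ∉ B).filter fun k => k ∈ rset g) = rset g \ B := by
      ext; simp [and_comm]
    have c2 : ((univ.filter fun k => k ∉ B).filter fun k => k ∉ rset g) = (rset g)ᶜ := by
      ext k; simp; intro h h'; exact h (hB1 h')
    rw [c1, c2, card_sdiff_of_subset hB1, card_compl, hB2, Fintype.card_fin]
  rw [card_eq_sum_card_fiberwise (f := fun s => mset g s) (t := (rset g).powersetCard i)]
  · rw [sum_congr rfl h1, sum_const, card_powersetCard, smul_eq_mul, mul_assoc]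
  · intro s hs
    simp only [coe_filter, mem_univ, true_and, Set.mem_ofPred_eq] at hs
    exact mem_coe.2 (mem_powersetCard.2 ⟨hsub s, hs⟩)

theorem prod_match (g : Fin n → Fin p ⊕ Fin n) (t : ℕ) (c : ℤ) :
    ∏ s : Fin n → Fin n, (c - (mset g s).card) ^ t =
      ∏ i ∈ range ((rset g).card + 1), (c - (i : ℤ)) ^
        (t * (rset g).card.choose i * (n - 1) ^ ((rset g).card - i) * n ^ (n - (rset g).card)) := by
  classical
  rw [← prod_fiberwise_of_maps_to (s := univ) (t := range ((rset g).card + 1))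
    (g := fun s => (mset g s).card)]
  · refine prod_congr rfl fun i _ => ?_
    rw [prod_congr rfl (g := fun _ => (c - (i : ℤ)) ^ t)]
    · rw [prod_const, card_match, ← pow_mul]
      congr 1; ring
    · intro s hs
      rw [(mem_filter.1 hs).2]
  · intro s _
    rw [mem_range, Nat.lt_succ_iff]
    apply card_le_card
    intro k hk
    simp only [mset, rset, mem_filter, mem_univ, true_and] at *
    exact ⟨_, hk⟩

theorem card_sub (B : Finset (Fin n)) (D : Finset (Fin p)) :
    (univ.filter fun g : Fin n → Fin p ⊕ Fin n => rset g = B ∧ lset g ⊆ D).card =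
      n ^ B.card * D.card ^ (n - B.card) := by
  classical
  have : (univ.filter fun g : Fin n → Fin p ⊕ Fin n => rset g = B ∧ lset g ⊆ D) =
      Fintype.piFinset fun k => if k ∈ B then univ.image Sum.inr else D.image Sum.inl := by
    ext g
    simp only [mem_filter, mem_univ, true_and, Fintype.mem_piFinset]
    constructor
    · rintro ⟨rfl, h⟩ k
      split_ifs with hk
      · simp only [rset, mem_filter, mem_univ, true_and] at hk
        obtain ⟨l, hl⟩ := hk
        simp [hl]
      · simp only [rset, mem_filter, mem_univ, true_and, not_exists] at hk
        rcases hg : g k with c | l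
        · have : c ∈ lset g := by simp only [lset, mem_filter, mem_univ, true_and]; exact ⟨k, hg⟩
          simpa using h this
        · exact absurd hg (hk l)
    · intro h
      constructor
      · ext k
        have := h k
        simp only [rset, mem_filter, mem_univ, true_and]
        split_ifs at this with hk
        · obtain ⟨l, -, hl⟩ := mem_image.1 this
          simp only [hk, iff_true]; exact ⟨l, hl.symm⟩
        · obtain ⟨l, -, hl⟩ := mem_image.1 this
          simp [hk, ← hl]
      · intro c hc
        simp only [lset, mem_filter, mem_univ, true_and] at hc
        obtain ⟨k, hk⟩ := hc
        have := h k
        rw [hk] at this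
        split_ifs at this <;> simpa using this
  rw [this, Fintype.card_piFinset]
  have : ∀ k : Fin n, (if k ∈ B then univ.image Sum.inr else D.image Sum.inl :
      Finset (Fin p ⊕ Fin n)).card = if k ∈ B then n else D.card := by
    intro k
    split_ifs
    · rw [card_image_of_injective _ Sum.inr_injective]; simp
    · rw [card_image_of_injective _ Sum.inl_injective]
  simp only [this]
  rw [prod_ite]
  simp only [prod_const]
  congr 2
  · simp
  · have : (univ.filter fun k => k ∉ B) = Bᶜ := by ext; simp
    rw [this, card_compl, Fintype.card_fin]

theorem card_exact (B : Finset (Fin n)) (D : Finset (Fin p)) :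
    ((univ.filter fun g : Fin n → Fin p ⊕ Fin n => rset g = B ∧ lset g = D).card : ℤ) =
      (n : ℤ) ^ B.card * ∑ i ∈ range (D.card + 1),
        (-1 : ℤ) ^ i * (D.card.choose i : ℤ) * ((D.card : ℤ) - (i : ℤ)) ^ (n - B.card) := by
  classical
  have h := inclusion_exclusion_sum_inf_compl D
    (fun c => univ.filter fun g : Fin n → Fin p ⊕ Fin n => c ∉ lset g)
    (fun g => if rset g = B ∧ lset g ⊆ D then (1 : ℤ) else 0)
  have hl : ∑ a ∈ D.inf (fun c => (univ.filter fun g : Fin n → Fin p ⊕ Fin n => c ∉ lset g)ᶜ),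
      (if rset a = B ∧ lset a ⊆ D then (1 : ℤ) else 0) =
      ((univ.filter fun g : Fin n → Fin p ⊕ Fin n => rset g = B ∧ lset g = D).card : ℤ) := by
    rw [sum_ite, sum_const_zero, add_zero, sum_const, nsmul_eq_mul, mul_one]
    congr 2
    ext g
    simp only [mem_filter, mem_inf, mem_compl, mem_univ, true_and, not_not]
    constructor
    · rintro ⟨h1, h2, h3⟩
      exact ⟨h2, Subset.antisymm h3 h1⟩
    · rintro ⟨h2, rfl⟩
      exact ⟨fun _ h => h, h2, Subset.refl _⟩
  rw [← hl, h]
  have hr : ∀ T ∈ D.powerset, (-1 : ℤ) ^ T.card •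
      ∑ a ∈ T.inf (fun c => (univ.filter fun g : Fin n → Fin p ⊕ Fin n => c ∉ lset g)),
      (if rset a = B ∧ lset a ⊆ D then (1 : ℤ) else 0) =
      (-1 : ℤ) ^ T.card * ((n : ℤ) ^ B.card * ((D.card : ℤ) - (T.card : ℤ)) ^ (n - B.card)) := by
    intro T hT
    rw [mem_powerset] at hT
    rw [smul_eq_mul, sum_ite, sum_const_zero, add_zero, sum_const, nsmul_eq_mul, mul_one]
    congr 1
    have := card_sub B (D \ T)
    rw [card_sdiff_of_subset hT] at this
    rw [← Nat.cast_sub (card_le_card hT)]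
    norm_cast
    rw [← this]
    congr 1
    ext g
    simp only [mem_filter, mem_inf, mem_univ, true_and, subset_sdiff, Finset.disjoint_right]
    constructor
    · rintro ⟨h1, h2, h3⟩; exact ⟨h2, h3, h1⟩
    · rintro ⟨h2, h3, h1⟩; exact ⟨h1, h2, h3⟩
  rw [sum_congr rfl hr, sum_powerset_apply_card (fun i => (-1 : ℤ) ^ i * ((n : ℤ) ^ B.card * ((D.card : ℤ) - (i : ℤ)) ^ (n - B.card))), mul_sum]
  refine sum_congr rfl fun i _ => ?_
  rw [nsmul_eq_mul]; ring

theorem card_NS (N S : ℕ) :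
    ((univ.filter fun g : Fin n → Fin p ⊕ Fin n =>
      ((lset g).card, (rset g).card) = (N, S)).card : ℤ) =
      (n : ℤ) ^ S * (n.choose S : ℤ) * (p.choose N : ℤ) * ∑ i ∈ range (N + 1),
        (-1 : ℤ) ^ i * (N.choose i : ℤ) * ((N : ℤ) - (i : ℤ)) ^ (n - S) := by
  classical
  rw [card_eq_sum_card_fiberwise (f := fun g => (rset g, lset g))
    (t := (powersetCard S univ) ×ˢ (powersetCard N univ))]
  · push_cast
    rw [sum_congr rfl (g := fun _ => (n : ℤ) ^ S * ∑ i ∈ range (N + 1),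
        (-1 : ℤ) ^ i * (N.choose i : ℤ) * ((N : ℤ) - (i : ℤ)) ^ (n - S))]
    · rw [sum_const, card_product, card_powersetCard, card_powersetCard]
      simp only [card_univ, Fintype.card_fin, nsmul_eq_mul]
      push_cast; ring
    · rintro ⟨B, D⟩ h
      simp only [mem_product, mem_powersetCard, subset_univ, true_and] at h
      obtain ⟨rfl, rfl⟩ := h
      rw [← card_exact]
      congr 2
      ext g
      simp only [mem_filter, mem_univ, true_and, Prod.mk.injEq]
      constructor
      · exact fun h => h.2
      · rintro ⟨rfl, rfl⟩; simp
  · intro g hg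
    simp only [coe_filter, mem_univ, true_and, Set.mem_ofPred_eq, Prod.mk.injEq] at hg
    simp [mem_powersetCard, hg.1, hg.2]

theorem card_le (g : Fin n → Fin p ⊕ Fin n) : (lset g).card + (rset g).card ≤ n := by
  classical
  have : (lset g).card ≤ ((rset g)ᶜ).card := by
    rw [← card_image_of_injective (lset g) (Sum.inl_injective (β := Fin n))]
    refine (card_le_card (t := ((rset g)ᶜ).image g) ?_).trans card_image_le
    intro x hx
    obtain ⟨c, hc, rfl⟩ := mem_image.1 hx
    simp only [lset, mem_filter, mem_univ, true_and] at hc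
    obtain ⟨k, hk⟩ := hc
    refine mem_image.2 ⟨k, ?_, hk⟩
    simp [rset, hk]
  rw [card_compl, Fintype.card_fin] at this
  have h2 := card_le_univ (rset g)
  rw [Fintype.card_fin] at h2
  omega

theorem step3 (F : ℕ → ℕ → ℤ) :
    ∑ g : Fin n → Fin p ⊕ Fin n, F (lset g).card (rset g).card =
      (n : ℤ) ^ n * F 0 n + ∑ N ∈ Finset.Icc 1 n, ∑ S ∈ Finset.Icc 0 (n - N),
        (n : ℤ) ^ S * (n.choose S : ℤ) * (p.choose N : ℤ) *
          (∑ i ∈ Finset.range N, (-1 : ℤ) ^ i * (N.choose i : ℤ) * ((N : ℤ) - (i : ℤ)) ^ (n - S)) *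
          F N S := by
  classical
  have h0 : ∑ g : Fin n → Fin p ⊕ Fin n, F (lset g).card (rset g).card =
      ∑ q ∈ (range (n + 1)).sigma (fun N => Icc 0 (n - N)),
        ((univ.filter fun g : Fin n → Fin p ⊕ Fin n =>
          ((lset g).card, (rset g).card) = (q.1, q.2)).card : ℤ) * F q.1 q.2 := by
    rw [← sum_fiberwise_of_maps_to (s := univ)
      (t := (range (n + 1)).sigma (fun N => Icc 0 (n - N)))
      (g := fun g : Fin n → Fin p ⊕ Fin n => (⟨(lset g).card, (rset g).card⟩ : Σ _ : ℕ, ℕ))]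
    · refine sum_congr rfl ?_
      rintro ⟨N, S⟩ -
      rw [sum_congr rfl (g := fun _ => F N S)]
      · rw [sum_const, nsmul_eq_mul]
        congr 3
        ext g
        simp
      · intro g hg
        have := (mem_filter.1 hg).2
        simp only [Sigma.mk.injEq, heq_eq_eq] at this
        rw [this.1, this.2]
    · intro g _
      have := card_le g
      simp only [mem_sigma, mem_range, mem_Icc]
      omega
  rw [h0, sum_sigma, range_eq_Ico, ← Finset.add_sum_Ioo_eq_sum_Ico (by omega)]
  have hI : Ioo 0 (n + 1) = Icc 1 n := by ext; simp; omega
  rw [hI]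
  simp only [card_NS]
  congr 1
  · rw [sum_eq_single_of_mem n (by simp)]
    · simp
    · intro b hb hbn
      simp only [mem_Icc] at hb
      have : n - b ≠ 0 := by omega
      simp [this]
  · refine sum_congr rfl fun N hN => sum_congr rfl fun S hS => ?_
    rw [mem_Icc] at hN hS
    have : n - S ≠ 0 := by omega
    rw [sum_range_succ]
    simp [this]

end helpers

/-- Lemma 2 of the paper: the exact count of proper `L`-colorings of `K_{n, nⁿt}` for
the particular `m`-assignment `L` built from an enumeration `A_0, …, A_{nⁿ-1}` of the
transversal family, with `L(x_k) = [m-n] ∪ S_k` and `L(y_k) = [m-n] ∪ A_{⌊(k-1)/t⌋}`. -/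
theorem numListColorings_Knl_transversal_assignment
    (n m t : ℕ) (hn : 2 ≤ n) (hm : n + 1 ≤ m) (ht : 1 ≤ t)
    (A : ℕ → Finset ℕ)
    (hAinj : Set.InjOn A (Set.Iio (n ^ n)))
    (hAmem : ∀ j < n ^ n, A j ∈ transversalFamily n m)
    (hAsurj : ∀ T ∈ transversalFamily n m, ∃ j < n ^ n, A j = T)
    (L : Fin n ⊕ Fin (n ^ n * t) → Finset ℕ)
    (hLx : ∀ k : Fin n, L (Sum.inl k) = Finset.Icc 1 (m - n) ∪ Sset n m (k.val + 1))
    (hLy : ∀ j : Fin (n ^ n * t), L (Sum.inr j) = Finset.Icc 1 (m - n) ∪ A (j.val / t)) :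
    (numListColorings (Knl n (n ^ n * t)) L : ℤ) =
      (n : ℤ) ^ n *
        ∏ i ∈ Finset.range (n + 1),
          ((m : ℤ) - (i : ℤ)) ^ (t * n.choose i * (n - 1) ^ (n - i)) +
      ∑ N ∈ Finset.Icc 1 n, ∑ S ∈ Finset.Icc 0 (n - N),
        (n : ℤ) ^ S * (n.choose S : ℤ) * ((m - n).choose N : ℤ) *
          (∑ i ∈ Finset.range N, (-1 : ℤ) ^ i * (N.choose i : ℤ) * ((N : ℤ) - (i : ℤ)) ^ (n - S)) *
          ∏ i ∈ Finset.range (S + 1),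
            ((m : ℤ) - (N : ℤ) - (i : ℤ)) ^ (t * S.choose i * (n - 1) ^ (S - i) * n ^ (n - S)) := by
  obtain ⟨p, rfl⟩ : ∃ p, m = p + n := ⟨m - n, by omega⟩
  have hp : p + n - n = p := by omega
  rw [step1 (p + n) t hp ht A hAinj hAmem hAsurj L hLx hLy, hp]
  simp only [prod_match]
  rw [step3 (fun N S => ∏ i ∈ Finset.range (S + 1), ((p : ℤ) + n - (N : ℤ) - (i : ℤ)) ^
    (t * S.choose i * (n - 1) ^ (S - i) * n ^ (n - S)))]
  push_cast
  simp
end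

section
/- Suppose G = K_{2,r} and there is a balanced m-assignment L for G with m ≥ 3 such that P(G,L) < P(G,m). Suppose there is an ε ∈ (0,2) such that ⌊r/4⌋ > max{ ln(ε/(2(m−2))) / (2·ln((m−2)/(m−1))), ln((2−ε)/4) / ln(1 − 1/(m−1)²) }. Then for each l ≥ r, there is a balanced m-assignment L' for G' = K_{2,l} such that P(G',L') < P(G',m); consequently, P_ℓ(K_{2,l}, m) < P(K_{2,l}, m) (and hence τ(K_{2,l}) > m) whenever l ≥ r. -/
/-- The four possible lists on the `y`-vertices in a balanced `m`-assignment. -/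
def balSet (m : ℕ) : Fin 4 → Finset ℕ :=
  ![Finset.Icc 1 (m - 2) ∪ {m - 1, m + 1}, Finset.Icc 1 (m - 2) ∪ {m - 1, m + 2},
    Finset.Icc 1 (m - 2) ∪ {m, m + 1}, Finset.Icc 1 (m - 2) ∪ {m, m + 2}]

/-- `z_{i+1}`: the number of `y`-vertices of `K_{2,l}` whose list is `balSet m i`. -/
def zCount {l : ℕ} (L : Fin 2 ⊕ Fin l → Finset ℕ) (m : ℕ) (i : Fin 4) : ℕ :=
  (Finset.univ.filter fun j : Fin l => L (Sum.inr j) = balSet m i).card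

/-- A balanced `m`-assignment for `K_{2,l}`: an `m`-assignment with
`L(x_1) = [m]`, `L(x_2) = [m-2] ∪ {m+1, m+2}`, `z_1 + z_2 + z_3 + z_4 = l`,
and `|z_i - z_j| ≤ 1` for all `i, j ∈ [4]`. -/
def IsBalanced {l : ℕ} (m : ℕ) (L : Fin 2 ⊕ Fin l → Finset ℕ) : Prop :=
  IsAssignment L m ∧
  L (Sum.inl 0) = Finset.Icc 1 m ∧
  L (Sum.inl 1) = Finset.Icc 1 (m - 2) ∪ {m + 1, m + 2} ∧
  (∑ i : Fin 4, zCount L m i) = l ∧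
  ∀ i j : Fin 4, |(zCount L m i : ℤ) - (zCount L m j : ℤ)| ≤ 1

lemma num_eq (l : ℕ) (L : Fin 2 ⊕ Fin l → Finset ℕ) :
    numListColorings (K2l l) L =
      ∑ a ∈ L (Sum.inl 0), ∑ b ∈ L (Sum.inl 1), ∏ j, (L (Sum.inr j) \ {a, b}).card := by
  classical
  have h : ((L (Sum.inl 0) ×ˢ L (Sum.inl 1)).sigma
      (fun p => Fintype.piFinset fun j : Fin l => L (Sum.inr j) \ {p.1, p.2})).card =
      ∑ a ∈ L (Sum.inl 0), ∑ b ∈ L (Sum.inl 1), ∏ j, (L (Sum.inr j) \ {a, b}).card := by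
    rw [Finset.card_sigma, Finset.sum_product]
    simp [Fintype.card_piFinset]
  rw [← h, ← Set.ncard_coe_finset]
  unfold numListColorings
  refine Set.ncard_congr (fun f _ => ⟨(f (Sum.inl 0), f (Sum.inl 1)), fun j => f (Sum.inr j)⟩) ?_ ?_ ?_
  · rintro f ⟨h1, h2⟩
    simp only [Finset.coe_sigma, Set.mem_sigma_iff, Finset.mem_coe, Finset.mem_product,
      Fintype.mem_piFinset, Finset.mem_sdiff, Finset.mem_insert, Finset.mem_singleton, not_or]
    refine ⟨⟨h1 _, h1 _⟩, fun j => ⟨h1 _, ?_, ?_⟩⟩ <;>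
    · apply h2; simp [K2l]
  · intro f g _ _ hfg
    simp only [Sigma.mk.injEq, Prod.mk.injEq, heq_eq_eq] at hfg
    funext v
    rcases v with v | v
    · fin_cases v
      · exact hfg.1.1
      · exact hfg.1.2
    · exact congrFun hfg.2 v
  · rintro ⟨⟨a, b⟩, g⟩ hg
    simp only [Finset.coe_sigma, Set.mem_sigma_iff, Finset.mem_coe, Finset.mem_product,
      Fintype.mem_piFinset, Finset.mem_sdiff, Finset.mem_insert, Finset.mem_singleton, not_or] at hg
    refine ⟨Sum.elim ![a, b] g, ⟨?_, ?_⟩, ?_⟩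
    · rintro (v | v)
      · fin_cases v
        · exact hg.1.1
        · exact hg.1.2
      · exact (hg.2 v).1
    · rintro (u | u) (w | w) huw
      · simp [K2l] at huw
      · have := hg.2 w
        fin_cases u
        · simpa using Ne.symm this.2.1
        · simpa using Ne.symm this.2.2
      · have := hg.2 u
        fin_cases w
        · simpa using this.2.1
        · simpa using this.2.2
      · simp [K2l] at huw
    · simp

lemma card_sdiff_pair (S : Finset ℕ) {a b : ℕ} (hab : a ≠ b) :
    (S \ {a, b}).card + (if a ∈ S then 1 else 0) + (if b ∈ S then 1 else 0) = S.card := by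
  have h1 : S \ {a, b} = (S.erase a).erase b := by ext; simp; tauto
  have h2 : b ∈ S.erase a ↔ b ∈ S := by simp [hab.symm]
  rw [h1]
  by_cases hb : b ∈ S
  · have := Finset.card_erase_add_one (h2.2 hb)
    by_cases ha : a ∈ S
    · have := Finset.card_erase_add_one ha
      simp only [ha, hb, if_true]; omega
    · rw [Finset.erase_eq_of_notMem ha] at *
      simp only [ha, hb, if_true, if_false]; omega
  · rw [Finset.erase_eq_of_notMem (fun h => hb (h2.1 h))]
    by_cases ha : a ∈ S
    · have := Finset.card_erase_add_one ha
      simp only [ha, hb, if_true, if_false]; omega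
    · rw [Finset.erase_eq_of_notMem ha] at *
      simp only [ha, hb, if_false]; omega

lemma card_sdiff_same (S : Finset ℕ) (a : ℕ) :
    (S \ {a, a}).card + (if a ∈ S then 1 else 0) = S.card := by
  have h1 : S \ {a, a} = S.erase a := by ext; simp; tauto
  rw [h1]
  by_cases ha : a ∈ S
  · have := Finset.card_erase_add_one ha
    simp only [ha, if_true]; omega
  · rw [Finset.erase_eq_of_notMem ha]; simp [ha]

lemma chrom_eq (l n : ℕ) : (chromPoly (K2l l) (n + 2) : ℝ) =
    (n + 2) * (n + 1) ^ l + (n + 2) * (n + 1) * (n : ℝ) ^ l := by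
  unfold chromPoly
  rw [num_eq]
  push_cast
  have h : ∀ a ∈ Finset.Icc 1 (n + 2), ∑ b ∈ Finset.Icc 1 (n + 2),
      ∏ _j : Fin l, ((Finset.Icc 1 (n + 2) \ {a, b}).card : ℝ) =
      (n + 1) ^ l + (n + 1) * (n : ℝ) ^ l := by
    intro a ha
    have h2 : ∀ b ∈ Finset.Icc 1 (n + 2),
      ∏ _j : Fin l, ((Finset.Icc 1 (n + 2) \ {a, b}).card : ℝ) =
      (n : ℝ) ^ l + if a = b then ((n : ℝ) + 1) ^ l - (n : ℝ) ^ l else 0 := by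
      intro b hb
      rw [Finset.prod_const, Finset.card_univ, Fintype.card_fin]
      by_cases hab : a = b
      · subst hab
        have := card_sdiff_same (Finset.Icc 1 (n + 2)) a
        rw [if_pos ha, Nat.card_Icc] at this
        have h3 : (Finset.Icc 1 (n + 2) \ {a, a}).card = n + 1 := by omega
        rw [h3]; simp
      · have := card_sdiff_pair (Finset.Icc 1 (n + 2)) hab
        rw [if_pos ha, if_pos hb, Nat.card_Icc] at this
        have h3 : (Finset.Icc 1 (n + 2) \ {a, b}).card = n := by omega
        rw [h3]; simp [hab]
    rw [Finset.sum_congr rfl h2, Finset.sum_add_distrib, Finset.sum_ite_eq, if_pos ha]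
    simp
    ring
  rw [Finset.sum_congr rfl h]
  simp
  ring

lemma prod_lower {ι : Type*} (s : Finset ι) (x : ℝ) (hx : 0 ≤ x) (e : ι → ℝ) (he : ∀ i, 0 ≤ e i) :
    x ^ s.card * (x + ∑ i ∈ s, e i) ≤ x * ∏ i ∈ s, (x + e i) := by
  classical
  induction s using Finset.induction_on with
  | empty => simp
  | insert i s hi ih =>
    rw [Finset.card_insert_of_notMem hi, Finset.sum_insert hi, Finset.prod_insert hi]
    have h0 : 0 ≤ ∑ i ∈ s, e i := Finset.sum_nonneg fun i _ => he i
    have hp : 0 ≤ x ^ s.card := by positivity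
    have := mul_le_mul_of_nonneg_left ih (add_nonneg hx (he i))
    have h3 := mul_nonneg hp (mul_nonneg (he i) h0)
    rw [pow_succ]
    nlinarith

lemma bern (l : ℕ) (x : ℝ) (hx : (l : ℝ) ≤ x) :
    x * (x + 1) ^ l ≤ x ^ l * (x + (x + 1) * l) := by
  have hx0 : 0 ≤ x := le_trans (by positivity) hx
  have hy : 0 < x + 1 := by linarith
  have hb := one_add_mul_le_pow (a := -1 / (x + 1)) (by
    rw [le_div_iff₀ hy]; linarith) l
  have h1 : 1 + -1 / (x + 1) = x / (x + 1) := by field_simp; ring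
  rw [h1, div_pow, le_div_iff₀ (by positivity)] at hb
  have hl : (0 : ℝ) ≤ l := by positivity
  have h2 : x ≤ (1 + (l : ℝ) * (-1 / (x + 1))) * (x + (x + 1) * l) := by
    have : (1 + (l : ℝ) * (-1 / (x + 1))) * (x + (x + 1) * l) =
      x + l * ((x + 1) - l - x / (x + 1)) := by field_simp; ring
    rw [this]
    have h3 : x / (x + 1) ≤ 1 := by rw [div_le_one hy]; linarith
    have := mul_nonneg hl (by linarith : 0 ≤ (x + 1) - l - x / (x + 1))
    linarith
  have h4 : 0 ≤ x + (x + 1) * l := by positivity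
  calc x * (x + 1) ^ l ≤ (1 + (l : ℝ) * (-1 / (x + 1))) * (x + (x + 1) * l) * (x + 1) ^ l := by
        gcongr
    _ = (1 + (l : ℝ) * (-1 / (x + 1))) * (x + 1) ^ l * (x + (x + 1) * l) := by ring
    _ ≤ _ := by gcongr

lemma large (l n : ℕ) (hn : l < n) (L : Fin 2 ⊕ Fin l → Finset ℕ) (hL : IsAssignment L (n + 2)) :
    chromPoly (K2l l) (n + 2) ≤ numListColorings (K2l l) L := by
  rw [← Nat.cast_le (α := ℝ), chrom_eq, num_eq]
  push_cast
  set A := L (Sum.inl 0) with hA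
  set B := L (Sum.inl 1) with hB
  have cA : A.card = n + 2 := hL _
  have cB : B.card = n + 2 := hL _
  set x : ℝ := (n : ℝ) with hxdef
  have hx : 0 < x := by rw [hxdef]; exact_mod_cast (by omega : 0 < n)
  have hlx : (l : ℝ) ≤ x := by rw [hxdef]; exact_mod_cast hn.le
  let e : Fin l → ℕ → ℝ := fun j a => if a ∈ L (Sum.inr j) then 0 else 1
  have he : ∀ j a, 0 ≤ e j a := fun j a => by simp only [e]; split_ifs <;> norm_num
  let E : ℕ → ℝ := fun a => ∑ j, e j a
  have hE : ∀ a, 0 ≤ E a := fun a => Finset.sum_nonneg fun j _ => he j a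
  have key : ∀ a ∈ A, ∀ b ∈ B, x ^ l * (x + (E a + E b)) +
      (if a = b then x * (x + 1) ^ l - x ^ l * (x + 2 * E a) else 0) ≤
      x * ∏ j, ((L (Sum.inr j) \ {a, b}).card : ℝ) := by
    intro a _ b _
    by_cases hab : a = b
    · subst hab
      rw [if_pos rfl]
      have h1 : (x + 1) ^ l ≤ ∏ j, ((L (Sum.inr j) \ {a, a}).card : ℝ) := by
        have := Finset.prod_le_prod (s := (Finset.univ : Finset (Fin l))) (f := fun _ => x + 1)
          (g := fun j => ((L (Sum.inr j) \ {a, a}).card : ℝ)) (fun _ _ => by positivity) (by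
            intro j _
            have h2 := card_sdiff_same (L (Sum.inr j)) a
            rw [hL] at h2
            have : n + 1 ≤ (L (Sum.inr j) \ {a, a}).card := by split_ifs at h2 <;> omega
            rw [hxdef]; exact_mod_cast this)
        simpa using this
      have := mul_le_mul_of_nonneg_left h1 hx.le
      linarith
    · rw [if_neg hab, add_zero]
      have h1 := prod_lower (Finset.univ : Finset (Fin l)) x hx.le (fun j => e j a + e j b)
        (fun j => add_nonneg (he _ _) (he _ _))
      rw [Finset.sum_add_distrib, Finset.card_univ, Fintype.card_fin] at h1
      refine h1.trans (le_of_eq ?_)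
      congr 1
      refine Finset.prod_congr rfl fun j _ => ?_
      have h2 := card_sdiff_pair (L (Sum.inr j)) hab
      rw [hL] at h2
      have h3 : ((L (Sum.inr j) \ {a, b}).card : ℝ) + (if a ∈ L (Sum.inr j) then 1 else 0) +
        (if b ∈ L (Sum.inr j) then 1 else 0) = n + 2 := by exact_mod_cast h2
      simp only [e]
      split_ifs at h3 ⊢ <;> linarith
  have hsum := Finset.sum_le_sum fun a ha => Finset.sum_le_sum (key a ha)
  simp only [← Finset.mul_sum] at hsum
  have hlhs : ∑ a ∈ A, ∑ b ∈ B, (x ^ l * (x + (E a + E b)) +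
      (if a = b then x * (x + 1) ^ l - x ^ l * (x + 2 * E a) else 0)) =
      x ^ l * ((x + 2) ^ 2 * x + (x + 2) * (∑ a ∈ A, E a + ∑ b ∈ B, E b)) +
      ((A ∩ B).card * (x * (x + 1) ^ l - x ^ l * x) - 2 * x ^ l * ∑ a ∈ A ∩ B, E a) := by
    simp only [Finset.sum_add_distrib, Finset.sum_ite_eq, Finset.sum_ite_mem, ← Finset.mul_sum,
      Finset.sum_const, Finset.sum_sub_distrib, nsmul_eq_mul, cA, cB]
    push_cast
    ring
  rw [hlhs] at hsum
  have hAB : (A ∩ B).card ≤ n + 2 := by rw [← cA]; exact Finset.card_le_card Finset.inter_subset_left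
  set t : ℝ := ((A ∩ B).card : ℝ) with ht
  have htx : t ≤ x + 2 := by rw [ht, hxdef]; exact_mod_cast hAB
  set SA := ∑ a ∈ A, E a
  set SB := ∑ a ∈ B, E a
  set SI := ∑ a ∈ A ∩ B, E a
  have hIA : SI ≤ SA := Finset.sum_le_sum_of_subset_of_nonneg Finset.inter_subset_left
    fun i _ _ => hE i
  have hIB : SI ≤ SB := Finset.sum_le_sum_of_subset_of_nonneg Finset.inter_subset_right
    fun i _ _ => hE i
  have hd : l * (x + 2 - t) ≤ SA + SB := by
    have h1 : SA + SB = ∑ j : Fin l, (∑ a ∈ A, e j a + ∑ a ∈ B, e j a) := by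
      rw [Finset.sum_add_distrib, Finset.sum_comm, Finset.sum_comm (s := Finset.univ) (t := B)]
    rw [h1]
    have h2 : ∀ j ∈ (Finset.univ : Finset (Fin l)),
        x + 2 - t ≤ ∑ a ∈ A, e j a + ∑ a ∈ B, e j a := by
      intro j _
      have hs : ∀ S : Finset ℕ, ∑ a ∈ S, e j a = ((S \ L (Sum.inr j)).card : ℝ) := by
        intro S
        simp only [e]
        rw [Finset.sdiff_eq_filter, Finset.card_filter]
        push_cast
        refine Finset.sum_congr rfl fun a _ => ?_
        by_cases h : a ∈ L (Sum.inr j) <;> simp [h]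
      rw [hs, hs]
      have h3 := Finset.card_union_le (A \ L (Sum.inr j)) (B \ L (Sum.inr j))
      rw [← Finset.union_sdiff_distrib] at h3
      have h4 := Finset.le_card_sdiff (L (Sum.inr j)) (A ∪ B)
      have h5 := Finset.card_union_add_card_inter A B
      rw [hL] at h4
      have h6 : n + 2 ≤ (A \ L (Sum.inr j)).card + (B \ L (Sum.inr j)).card + (A ∩ B).card := by
        omega
      have h7 : (n : ℝ) + 2 ≤ (A \ L (Sum.inr j)).card + (B \ L (Sum.inr j)).card +
        (A ∩ B).card := by exact_mod_cast h6
      linarith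
    have := Finset.sum_le_sum h2
    simpa only [Finset.sum_const, Finset.card_univ, Fintype.card_fin, nsmul_eq_mul] using this
  have hb := bern l x hlx
  have hpow : 0 ≤ x ^ l := by positivity
  refine le_of_mul_le_mul_left (le_trans ?_ hsum) hx
  have k1 := mul_le_mul_of_nonneg_left hb (sub_nonneg.2 htx)
  have k2 := mul_le_mul_of_nonneg_left hd (mul_nonneg hpow (by linarith : 0 ≤ x + 1))
  have k3 := mul_le_mul_of_nonneg_left (add_le_add hIA hIB) hpow
  nlinarith

lemma const_assign (V : Type*) (m : ℕ) : IsAssignment (fun _ : V => Finset.Icc 1 m) m := by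
  intro v; simp

lemma lcf_large (l n : ℕ) (hn : l < n) :
    listColorFunction (K2l l) (n + 2) = chromPoly (K2l l) (n + 2) := by
  apply le_antisymm
  · exact Nat.sInf_le ⟨_, const_assign _ _, rfl⟩
  · refine le_csInf (s := {p | ∃ L, IsAssignment L (n + 2) ∧ numListColorings (K2l l) L = p}) ⟨_, _, const_assign _ _, rfl⟩ ?_
    rintro p ⟨L, hL, rfl⟩
    exact large l n hn L hL

lemma thr (l m : ℕ) (h : listColorFunction (K2l l) m < chromPoly (K2l l) m) :
    m < lcfThreshold (K2l l) := by
  by_contra hcon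
  push Not at hcon
  have hne : {k | chromNum (K2l l) ≤ k ∧
      ∀ m, k ≤ m → listColorFunction (K2l l) m = chromPoly (K2l l) m}.Nonempty := by
    refine ⟨l + 1 + 2, ?_, ?_⟩
    · apply Nat.sInf_le
      have : (0 : ℝ) < (chromPoly (K2l l) (l + 1 + 2) : ℝ) := by
        rw [chrom_eq]; positivity
      exact_mod_cast this
    · intro m hm
      obtain ⟨n, rfl⟩ : ∃ n, m = n + 2 := ⟨m - 2, by omega⟩
      exact lcf_large l n (by omega)
  have := (Nat.sInf_mem hne).2 m hcon
  omega

lemma bal_inj (n : ℕ) : Function.Injective (balSet (n + 2)) := by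
  intro i j h
  have h1 := Finset.ext_iff.1 h (n + 1)
  have h3 := Finset.ext_iff.1 h (n + 3)
  fin_cases i <;> fin_cases j <;> first | rfl | (exfalso; simp [balSet] at h1 h3)

lemma card_uv (n u v : ℕ) (hu : n < u) (hv : n < v) (huv : u ≠ v) :
    (Finset.Icc 1 n ∪ {u, v}).card = n + 2 := by
  rw [Finset.card_union_of_disjoint, Finset.card_pair huv, Nat.card_Icc]
  · omega
  · rw [Finset.disjoint_left]
    intro a ha
    rw [Finset.mem_Icc] at ha
    simp only [Finset.mem_insert, Finset.mem_singleton]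
    omega

lemma bal_card (n : ℕ) (i : Fin 4) : (balSet (n + 2) i).card = n + 2 := by
  fin_cases i <;>
  · refine card_uv n _ _ ?_ ?_ ?_ <;> omega

/-- the canonical form of a balanced-type assignment -/
def MM (n : ℕ) {l : ℕ} (τ : Fin l → Fin 4) : Fin 2 ⊕ Fin l → Finset ℕ :=
  Sum.elim ![Finset.Icc 1 (n + 2), Finset.Icc 1 n ∪ {n + 3, n + 4}] (fun j => balSet (n + 2) (τ j))

def EE (x : ℝ) (a b c d : ℕ) : ℝ :=
  2 * (x + 1) ^ (a + b + c + d) + (4 * x + 2) * x ^ (a + b + c + d)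
  - x * (x ^ (a + c) * (x + 1) ^ (b + d) + x ^ (b + d) * (x + 1) ^ (a + c)
       + x ^ (a + b) * (x + 1) ^ (c + d) + x ^ (c + d) * (x + 1) ^ (a + b))
  - (x ^ a * (x + 1) ^ (b + c) * (x + 2) ^ d + x ^ d * (x + 1) ^ (b + c) * (x + 2) ^ a
    + x ^ b * (x + 1) ^ (a + d) * (x + 2) ^ c + x ^ c * (x + 1) ^ (a + d) * (x + 2) ^ b)

lemma card_val (n : ℕ) (i : Fin 4) {a b : ℕ} (hab : a ≠ b) :
    ((balSet (n + 2) i \ {a, b}).card : ℝ) =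
      n + 2 - (if a ∈ balSet (n + 2) i then 1 else 0) - (if b ∈ balSet (n + 2) i then 1 else 0) := by
  have h2 := card_sdiff_pair (balSet (n + 2) i) hab
  rw [bal_card] at h2
  have h3 : ((balSet (n + 2) i \ {a, b}).card : ℝ) + (if a ∈ balSet (n + 2) i then 1 else 0) +
    (if b ∈ balSet (n + 2) i then 1 else 0) = n + 2 := by exact_mod_cast h2
  linarith

lemma mem_low (n : ℕ) (i : Fin 4) {a : ℕ} (ha : a ∈ Finset.Icc 1 n) : a ∈ balSet (n + 2) i := by
  rw [Finset.mem_Icc] at ha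
  fin_cases i <;> simp [balSet, ha.1, ha.2]

lemma num_MM (n l : ℕ) (τ : Fin l → Fin 4) (z : Fin 4 → ℕ)
    (hz : ∀ i, z i = (Finset.univ.filter fun j => τ j = i).card) :
    (chromPoly (K2l l) (n + 2) : ℝ) - numListColorings (K2l l) (MM n τ) =
      EE n (z 0) (z 1) (z 2) (z 3) := by
  have hl : l = z 0 + z 1 + z 2 + z 3 := by
    have := Finset.card_eq_sum_card_fiberwise (s := (Finset.univ : Finset (Fin l)))
      (t := Finset.univ) (f := τ) (by simp)
    simp only [← hz, Fin.sum_univ_four, Finset.card_univ, Fintype.card_fin] at this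
    exact this
  rw [chrom_eq, num_eq]
  push_cast
  have hp : ∀ a b, ∏ j, ((MM n τ (Sum.inr j) \ {a, b}).card : ℝ) =
      ((balSet (n + 2) 0 \ {a, b}).card : ℝ) ^ z 0 * ((balSet (n + 2) 1 \ {a, b}).card : ℝ) ^ z 1 *
      ((balSet (n + 2) 2 \ {a, b}).card : ℝ) ^ z 2 *
      ((balSet (n + 2) 3 \ {a, b}).card : ℝ) ^ z 3 := by
    intro a b
    have := Finset.prod_fiberwise' (Finset.univ : Finset (Fin l)) τ
      (fun i => ((balSet (n + 2) i \ {a, b}).card : ℝ))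
    simp only [Finset.prod_const, ← hz, Fin.prod_univ_four] at this
    rw [this]
    rfl
  simp only [hp]
  have e0 : MM n τ (Sum.inl 0) = Finset.Icc 1 n ∪ {n + 1, n + 2} := by
    simp only [MM, Sum.elim_inl, Matrix.cons_val_zero]
    ext a; simp; omega
  have e1 : MM n τ (Sum.inl 1) = Finset.Icc 1 n ∪ {n + 3, n + 4} := by
    simp [MM]
  rw [e0, e1]
  have s0 : ∀ f : ℕ → ℝ, ∑ a ∈ Finset.Icc 1 n ∪ {n + 1, n + 2}, f a =
      ∑ a ∈ Finset.Icc 1 n, f a + (f (n + 1) + f (n + 2)) := by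
    intro f
    rw [Finset.sum_union (by simp), Finset.sum_pair (by simp)]
  have s1 : ∀ f : ℕ → ℝ, ∑ a ∈ Finset.Icc 1 n ∪ {n + 3, n + 4}, f a =
      ∑ a ∈ Finset.Icc 1 n, f a + (f (n + 3) + f (n + 4)) := by
    intro f
    rw [Finset.sum_union (by simp), Finset.sum_pair (by simp)]
  simp only [s0, s1]
  set x : ℝ := (n : ℝ) with hx
  -- memberships
  have m1 : ∀ i, n + 1 ∈ balSet (n + 2) i ↔ (i = 0 ∨ i = 1) := by
    intro i; fin_cases i <;> simp [balSet]
  have m2 : ∀ i, n + 2 ∈ balSet (n + 2) i ↔ (i = 2 ∨ i = 3) := by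
    intro i; fin_cases i <;> simp [balSet]
  have m3 : ∀ i, n + 3 ∈ balSet (n + 2) i ↔ (i = 0 ∨ i = 2) := by
    intro i; fin_cases i <;> simp [balSet]
  have m4 : ∀ i, n + 4 ∈ balSet (n + 2) i ↔ (i = 1 ∨ i = 3) := by
    intro i; fin_cases i <;> simp [balSet]
  have a1 : x + 2 - 1 - 1 = x := by ring
  have a2 : x + 2 - 1 = x + 1 := by ring
  have c1 : ∀ a ∈ Finset.Icc 1 n, ∀ b ∈ Finset.Icc 1 n,
      ((balSet (n + 2) 0 \ {a, b}).card : ℝ) ^ z 0 * ((balSet (n + 2) 1 \ {a, b}).card : ℝ) ^ z 1 *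
      ((balSet (n + 2) 2 \ {a, b}).card : ℝ) ^ z 2 *
      ((balSet (n + 2) 3 \ {a, b}).card : ℝ) ^ z 3 =
      x ^ l + if a = b then (x + 1) ^ l - x ^ l else 0 := by
    intro a ha b hb
    by_cases hab : a = b
    · subst hab
      have : ∀ i, ((balSet (n + 2) i \ {a, a}).card : ℝ) = x + 1 := by
        intro i
        have h2 := card_sdiff_same (balSet (n + 2) i) a
        rw [bal_card, if_pos (mem_low n i ha)] at h2
        rw [hx]; exact_mod_cast (by omega : (balSet (n + 2) i \ {a, a}).card = n + 1)
      simp only [this, hl, pow_add, if_true]; ring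
    · simp only [card_val n _ hab, mem_low n _ ha, mem_low n _ hb, if_true, ← hx, a1, hab, if_false,
        hl, pow_add]; ring
  have c2 : ∀ a ∈ Finset.Icc 1 n, a ≠ n + 3 ∧ a ≠ n + 4 ∧ n + 1 ≠ a ∧ n + 2 ≠ a := by
    intro a ha; rw [Finset.mem_Icc] at ha; omega
  have T1 : ∀ a ∈ Finset.Icc 1 n, ∑ b ∈ Finset.Icc 1 n,
      ((balSet (n + 2) 0 \ {a, b}).card : ℝ) ^ z 0 * ((balSet (n + 2) 1 \ {a, b}).card : ℝ) ^ z 1 *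
      ((balSet (n + 2) 2 \ {a, b}).card : ℝ) ^ z 2 *
      ((balSet (n + 2) 3 \ {a, b}).card : ℝ) ^ z 3 = x * x ^ l + ((x + 1) ^ l - x ^ l) := by
    intro a ha
    rw [Finset.sum_congr rfl (c1 a ha), Finset.sum_add_distrib, Finset.sum_ite_eq, if_pos ha]
    simp [hx]
  rw [Finset.sum_congr rfl (g := fun a => x * x ^ l + ((x + 1) ^ l - x ^ l) +
    (x ^ z 0 * (x + 1) ^ z 1 * x ^ z 2 * (x + 1) ^ z 3 +
     (x + 1) ^ z 0 * x ^ z 1 * (x + 1) ^ z 2 * x ^ z 3)) (by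
      intro a ha
      rw [T1 a ha]
      simp only [card_val n _ (c2 a ha).1, card_val n _ (c2 a ha).2.1, mem_low n _ ha, m3, m4]
      simp [← hx, a1, a2])]
  have U1 : ∑ b ∈ Finset.Icc 1 n,
      ((balSet (n + 2) 0 \ {n + 1, b}).card : ℝ) ^ z 0 *
      ((balSet (n + 2) 1 \ {n + 1, b}).card : ℝ) ^ z 1 *
      ((balSet (n + 2) 2 \ {n + 1, b}).card : ℝ) ^ z 2 *
      ((balSet (n + 2) 3 \ {n + 1, b}).card : ℝ) ^ z 3 =
      ∑ b ∈ Finset.Icc 1 n, (x ^ z 0 * x ^ z 1 * (x + 1) ^ z 2 * (x + 1) ^ z 3) := by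
    refine Finset.sum_congr rfl fun b hb => ?_
    simp only [card_val n _ (c2 b hb).2.2.1, mem_low n _ hb, m1]
    simp [← hx, a1, a2]
  have U2 : ∑ b ∈ Finset.Icc 1 n,
      ((balSet (n + 2) 0 \ {n + 2, b}).card : ℝ) ^ z 0 *
      ((balSet (n + 2) 1 \ {n + 2, b}).card : ℝ) ^ z 1 *
      ((balSet (n + 2) 2 \ {n + 2, b}).card : ℝ) ^ z 2 *
      ((balSet (n + 2) 3 \ {n + 2, b}).card : ℝ) ^ z 3 =
      ∑ b ∈ Finset.Icc 1 n, ((x + 1) ^ z 0 * (x + 1) ^ z 1 * x ^ z 2 * x ^ z 3) := by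
    refine Finset.sum_congr rfl fun b hb => ?_
    simp only [card_val n _ (c2 b hb).2.2.2, mem_low n _ hb, m2]
    simp [← hx, a1, a2]
  rw [U1, U2]
  simp only [Finset.sum_const, Nat.card_Icc, nsmul_eq_mul, add_tsub_cancel_right, ← hx]
  simp only [card_val n _ (show n + 1 ≠ n + 3 by omega), card_val n _ (show n + 1 ≠ n + 4 by omega),
    card_val n _ (show n + 2 ≠ n + 3 by omega), card_val n _ (show n + 2 ≠ n + 4 by omega),
    m1, m2, m3, m4]
  simp [← hx, a1, a2]
  rw [hl]
  simp only [EE, pow_add]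
  ring

lemma of_bal (n l : ℕ) (L : Fin 2 ⊕ Fin l → Finset ℕ) (h : IsBalanced (n + 2) L) :
    ∃ τ : Fin l → Fin 4, L = MM n τ := by
  obtain ⟨-, h0, h1, hs, -⟩ := h
  have hu : (Finset.univ.biUnion fun i : Fin 4 =>
      Finset.univ.filter fun j : Fin l => L (Sum.inr j) = balSet (n + 2) i).card = l := by
    rw [Finset.card_biUnion]
    · exact hs
    · intro i _ k _ hik
      simp only [Function.onFun]
      rw [Finset.disjoint_filter]
      intro j _ h1 h2
      exact hik (bal_inj n (h1.symm.trans h2))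
  have hu2 := (Finset.card_eq_iff_eq_univ _).1 (hu.trans (Fintype.card_fin l).symm)
  have : ∀ j, ∃ i, L (Sum.inr j) = balSet (n + 2) i := by
    intro j
    have := hu2 ▸ Finset.mem_univ j
    simpa using this
  choose τ hτ using this
  refine ⟨τ, ?_⟩
  funext v
  rcases v with v | v
  · fin_cases v
    · simpa [MM] using h0
    · simpa [MM] using h1
  · exact hτ v

lemma z_MM (n l : ℕ) (τ : Fin l → Fin 4) (i : Fin 4) :
    zCount (MM n τ) (n + 2) i = (Finset.univ.filter fun j => τ j = i).card := by
  unfold zCount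
  congr 1
  ext j
  simp [MM, (bal_inj n).eq_iff]

def tc (l : ℕ) : Fin l → Fin 4 := fun j => ![0, 3, 1, 2] (Fin.ofNat 4 j)

lemma tc_count (l : ℕ) (i : Fin 4) :
    (Finset.univ.filter fun j => tc l j = i).card =
      (![(l + 3) / 4, (l + 1) / 4, l / 4, (l + 2) / 4] : Fin 4 → ℕ) i := by
  induction l with
  | zero => fin_cases i <;> simp
  | succ l ih =>
    rw [Finset.card_filter, Fin.sum_univ_castSucc, ← Finset.card_filter]
    have h1 : ∀ j : Fin l, tc (l + 1) j.castSucc = tc l j := fun j => rfl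
    simp only [h1, ih]
    have h2 : tc (l + 1) (Fin.last l) = ![0, 3, 1, 2] (Fin.ofNat 4 l) := rfl
    rw [h2]
    obtain ⟨k, hk⟩ : ∃ k, k = l / 4 := ⟨_, rfl⟩
    have h4 : l % 4 < 4 := Nat.mod_lt _ (by norm_num)
    have h5 : Fin.ofNat 4 l = ⟨l % 4, h4⟩ := rfl
    rw [h5]
    generalize hq : l % 4 = q at h4
    interval_cases q <;> fin_cases i <;> simp <;> omega

lemma bal_tc (n l : ℕ) : IsBalanced (n + 2) (MM n (tc l)) := by
  refine ⟨?_, rfl, rfl, ?_, ?_⟩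
  · rintro (v | v)
    · fin_cases v
      · simp [MM]
      · exact card_uv n _ _ (by omega) (by omega) (by omega)
    · exact bal_card _ _
  · simp only [z_MM, tc_count, Fin.sum_univ_four]
    simp
    omega
  · intro i j
    simp only [z_MM, tc_count]
    rw [abs_le]
    fin_cases i <;> fin_cases j <;> simp <;> omega

def CC (x : ℝ) (l : ℕ) : ℝ := EE x ((l + 3) / 4) ((l + 1) / 4) (l / 4) ((l + 2) / 4)

lemma EE_le (x : ℝ) (hx : 0 ≤ x) (k s : ℕ) (hs : s < 4) (a b c d : ℕ)
    (hsum : a + b + c + d = 4 * k + s)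
    (ha : a = k ∨ a = k + 1) (hb : b = k ∨ b = k + 1) (hc : c = k ∨ c = k + 1)
    (hd : d = k ∨ d = k + 1) : EE x a b c d ≤ CC x (4 * k + s) := by
  have hX : 0 ≤ x ^ k := by positivity
  have hY : 0 ≤ (x + 1) ^ k := by positivity
  have hZ : 0 ≤ (x + 2) ^ k := by positivity
  have e0 : CC x (4 * k + 0) = EE x k k k k := by
    unfold CC; congr 1 <;> omega
  have e1 : CC x (4 * k + 1) = EE x (k + 1) k k k := by
    unfold CC; congr 1 <;> omega
  have e2 : CC x (4 * k + 2) = EE x (k + 1) k k (k + 1) := by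
    unfold CC; congr 1 <;> omega
  have e3 : CC x (4 * k + 3) = EE x (k + 1) (k + 1) k (k + 1) := by
    unfold CC; congr 1 <;> omega
  have hpos : 0 ≤ x * ((x ^ k) ^ 2 * ((x + 1) ^ k) ^ 2) +
      2 * (x ^ k * ((x + 1) ^ k) ^ 2 * (x + 2) ^ k) := by positivity
  interval_cases s
  · rw [e0]
    rcases ha with ha | ha <;> rcases hb with hb | hb <;> rcases hc with hc | hc <;>
      rcases hd with hd | hd <;> first | (exfalso; omega) | (rw [ha, hb, hc, hd])
  · rw [e1]
    rcases ha with ha | ha <;> rcases hb with hb | hb <;> rcases hc with hc | hc <;>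
      rcases hd with hd | hd <;> first | (exfalso; omega) | skip
    all_goals
      simp only [ha, hb, hc, hd]
      apply le_of_eq
      simp only [EE, pow_add, pow_one]
      try ring
  · rw [e2]
    rcases ha with ha | ha <;> rcases hb with hb | hb <;> rcases hc with hc | hc <;>
      rcases hd with hd | hd <;> first | (exfalso; omega) | skip
    all_goals
      simp only [ha, hb, hc, hd]
      rw [← sub_nonneg]
      simp only [EE, pow_add, pow_one]
      generalize x ^ k = X at *
      generalize (x + 1) ^ k = Y at *
      generalize (x + 2) ^ k = Z at *
      first
      | (refine hpos.trans (le_of_eq ?_); ring; done)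
      | (apply le_of_eq; ring; done)
  · rw [e3]
    rcases ha with ha | ha <;> rcases hb with hb | hb <;> rcases hc with hc | hc <;>
      rcases hd with hd | hd <;> first | (exfalso; omega) | skip
    all_goals
      simp only [ha, hb, hc, hd]
      apply le_of_eq
      simp only [EE, pow_add, pow_one]
      try ring

lemma CC_step (x : ℝ) (hx : 0 ≤ x) (l : ℕ)
    (h : (2 * x + 1) * (x ^ (l / 4)) ^ 2 ≤ x * ((x + 1) ^ (l / 4)) ^ 2) :
    (x + 1) * CC x l ≤ CC x (l + 1) := by
  obtain ⟨k, hk⟩ : ∃ k, k = l / 4 := ⟨_, rfl⟩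
  rw [← hk] at h
  have hX : 0 ≤ x ^ k := by positivity
  have hY : 0 ≤ (x + 1) ^ k := by positivity
  have hZ : 0 ≤ (x + 2) ^ k := by positivity
  obtain ⟨s, hs⟩ : ∃ s, s = l % 4 := ⟨_, rfl⟩
  have hs4 : s < 4 := by omega
  have hl : l = 4 * k + s := by omega
  subst hl
  have e0 : CC x (4 * k + 0) = EE x k k k k := by
    unfold CC; congr 1 <;> omega
  have e1 : CC x (4 * k + 1) = EE x (k + 1) k k k := by
    unfold CC; congr 1 <;> omega
  have e2 : CC x (4 * k + 2) = EE x (k + 1) k k (k + 1) := by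
    unfold CC; congr 1 <;> omega
  have e3 : CC x (4 * k + 3) = EE x (k + 1) (k + 1) k (k + 1) := by
    unfold CC; congr 1 <;> omega
  have e4 : CC x (4 * k + 3 + 1) = EE x (k + 1) (k + 1) (k + 1) (k + 1) := by
    unfold CC; congr 1 <;> omega
  clear hs hk
  interval_cases s
  · rw [e0, show 4 * k + 0 + 1 = 4 * k + 1 from rfl, e1, ← sub_nonneg]
    simp only [EE, pow_add, pow_one]
    generalize x ^ k = X at *
    generalize (x + 1) ^ k = Y at *
    generalize (x + 2) ^ k = Z at *
    have : 0 ≤ 2 * X ^ 2 * (x * Y ^ 2 - (2 * x + 1) * X ^ 2) :=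
      mul_nonneg (by positivity) (by linarith)
    refine this.trans (le_of_eq ?_); ring
  · rw [e1, show 4 * k + 1 + 1 = 4 * k + 2 from rfl, e2, ← sub_nonneg]
    simp only [EE, pow_add, pow_one]
    generalize x ^ k = X at *
    generalize (x + 1) ^ k = Y at *
    generalize (x + 2) ^ k = Z at *
    have h1 : 0 ≤ 2 * X ^ 2 * x * (x * Y ^ 2 - (2 * x + 1) * X ^ 2) :=
      mul_nonneg (by positivity) (by linarith)
    have h2 : 0 ≤ 2 * X ^ 2 * x * Y ^ 2 + 2 * X * Y ^ 2 * Z := by positivity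
    refine (add_nonneg h1 h2).trans (le_of_eq ?_); ring
  · rw [e2, show 4 * k + 2 + 1 = 4 * k + 3 from rfl, e3, ← sub_nonneg]
    simp only [EE, pow_add, pow_one]
    generalize x ^ k = X at *
    generalize (x + 1) ^ k = Y at *
    generalize (x + 2) ^ k = Z at *
    have h1 : 0 ≤ 2 * X ^ 2 * x ^ 2 * (x * Y ^ 2 - (2 * x + 1) * X ^ 2) :=
      mul_nonneg (by positivity) (by linarith)
    have h2 : 0 ≤ 2 * X ^ 2 * x ^ 2 * Y ^ 2 := by positivity
    ring_nf
    ring_nf at h1 h2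
    nlinarith
  · rw [e3, e4, ← sub_nonneg]
    simp only [EE, pow_add, pow_one]
    generalize x ^ k = X at *
    generalize (x + 1) ^ k = Y at *
    generalize (x + 2) ^ k = Z at *
    have h1 : 0 ≤ 2 * X ^ 2 * x ^ 3 * (x * Y ^ 2 - (2 * x + 1) * X ^ 2) :=
      mul_nonneg (by positivity) (by linarith)
    have h2 : 0 ≤ 2 * X * Y ^ 2 * Z * (x + 1) ^ 2 := by positivity
    have h3 : 0 ≤ X ^ 2 * x ^ 3 * Y ^ 2 := by positivity
    have h4 : 0 ≤ X ^ 2 * x ^ 2 * Y ^ 2 := by positivity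
    ring_nf
    ring_nf at h1 h2 h3 h4
    nlinarith

lemma CC_mono (x : ℝ) (hx : 0 ≤ x) (r l : ℕ) (hrl : r ≤ l)
    (h : (2 * x + 1) * (x ^ (r / 4)) ^ 2 ≤ x * ((x + 1) ^ (r / 4)) ^ 2)
    (hp : 0 < CC x r) : 0 < CC x l := by
  induction l, hrl using Nat.le_induction with
  | base => exact hp
  | succ l hl ih =>
    refine lt_of_lt_of_le (mul_pos (by linarith) ih) (CC_step x hx l ?_)
    obtain ⟨d, hd⟩ := Nat.exists_eq_add_of_le (Nat.div_le_div_right (c := 4) hl)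
    rw [hd, pow_add, pow_add, mul_pow, mul_pow]
    have h1 : (x ^ d) ^ 2 ≤ ((x + 1) ^ d) ^ 2 := by gcongr; linarith
    calc (2 * x + 1) * ((x ^ (r / 4)) ^ 2 * (x ^ d) ^ 2)
        = (2 * x + 1) * (x ^ (r / 4)) ^ 2 * (x ^ d) ^ 2 := by ring
      _ ≤ x * ((x + 1) ^ (r / 4)) ^ 2 * ((x + 1) ^ d) ^ 2 := by gcongr
      _ = _ := by ring

lemma cond_of (n k : ℕ) (hn : 1 ≤ n) (ε : ℝ) (hε : ε ∈ Set.Ioo (0 : ℝ) 2)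
    (h1 : Real.log (ε / (2 * (n : ℝ))) / (2 * Real.log ((n : ℝ) / (n + 1))) < k)
    (h2 : Real.log ((2 - ε) / 4) / Real.log (1 - 1 / ((n : ℝ) + 1) ^ 2) < k) :
    (2 * (n : ℝ) + 1) * ((n : ℝ) ^ k) ^ 2 ≤ n * (((n : ℝ) + 1) ^ k) ^ 2 := by
  have hn0 : (0 : ℝ) < n := by exact_mod_cast hn
  obtain ⟨he0, he2⟩ := hε
  have hq : Real.log ((n : ℝ) / (n + 1)) < 0 :=
    Real.log_neg (by positivity) (by rw [div_lt_one (by positivity)]; linarith)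
  have hpq0 : 0 < 1 - 1 / ((n : ℝ) + 1) ^ 2 := by
    rw [sub_pos, div_lt_one (by positivity)]; nlinarith
  have hpq : Real.log (1 - 1 / ((n : ℝ) + 1) ^ 2) < 0 :=
    Real.log_neg hpq0 (by have : 0 < 1 / ((n : ℝ) + 1) ^ 2 := by positivity
                          linarith)
  rw [div_lt_iff_of_neg (by linarith)] at h1
  rw [div_lt_iff_of_neg hpq, ← Real.log_pow, Real.log_lt_log_iff (by positivity) (by linarith)] at h2
  have h1' : ((n : ℝ) / (n + 1)) ^ (2 * k) < ε / (2 * n) := by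
    rw [← Real.log_lt_log_iff (by positivity) (by positivity), Real.log_pow]
    push_cast; linarith
  have hk : k ≠ 0 := by
    rintro rfl
    rw [pow_zero] at h2; linarith
  rcases (by omega : n = 1 ∨ n = 2 ∨ 3 ≤ n) with rfl | rfl | h3
  · have : (4 : ℝ) ≤ 4 ^ k := le_self_pow₀ (by norm_num) hk
    have e : (((1 : ℕ) : ℝ) + 1) ^ k ^ 1 = 2 ^ k := by norm_num
    norm_num
    rw [← pow_mul, mul_comm, pow_mul]
    norm_num
    linarith
  · have hk1 : k ≠ 1 := by
      rintro rfl
      norm_num at h2; linarith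
    obtain ⟨d, rfl⟩ : ∃ d, k = d + 2 := ⟨k - 2, by omega⟩
    norm_num
    rw [← pow_mul, ← pow_mul, mul_comm, mul_comm (d + 2), pow_mul, pow_mul, pow_add, pow_add]
    have : (4 : ℝ) ^ d ≤ 9 ^ d := by gcongr; norm_num
    norm_num
    nlinarith [pow_nonneg (by norm_num : (0 : ℝ) ≤ 9) d]
  · have h3' : (3 : ℝ) ≤ n := by exact_mod_cast h3
    rw [div_pow, div_lt_div_iff₀ (by positivity) (by positivity), mul_comm 2 k, pow_mul, pow_mul] at h1'
    have hX : 0 ≤ ((n : ℝ) ^ k) ^ 2 := by positivity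
    have hY : 0 ≤ (((n : ℝ) + 1) ^ k) ^ 2 := by positivity
    generalize ((n : ℝ) ^ k) ^ 2 = X at *
    generalize (((n : ℝ) + 1) ^ k) ^ 2 = Y at *
    have h4 : X * n ≤ Y := by nlinarith
    nlinarith [mul_le_mul_of_nonneg_left h4 hn0.le, mul_nonneg hX (by nlinarith : 0 ≤ (n : ℝ) ^ 2 - 2 * n - 1)]

/-- Lemma 4 of the paper: if `G = K_{2,r}` has a balanced `m`-assignment `L` with
`m ≥ 3` and `P(G,L) < P(G,m)`, and there is `ε ∈ (0,2)` with
`⌊r/4⌋ > max{ln(ε/(2(m-2)))/(2 ln((m-2)/(m-1))), ln((2-ε)/4)/ln(1-1/(m-1)²)}`,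
then for each `l ≥ r` the graph `G' = K_{2,l}` has a balanced `m`-assignment `L'`
with `P(G',L') < P(G',m)`; consequently `P_ℓ(K_{2,l},m) < P(K_{2,l},m)`, i.e.
`τ(K_{2,l}) > m`, whenever `l ≥ r`. -/
theorem exists_balanced_of_ge (r m : ℕ) (hm : 3 ≤ m)
    (L : Fin 2 ⊕ Fin r → Finset ℕ) (hbal : IsBalanced m L)
    (hlt : numListColorings (K2l r) L < chromPoly (K2l r) m)
    (ε : ℝ) (hε : ε ∈ Set.Ioo (0 : ℝ) 2)
    (hr : ((r / 4 : ℕ) : ℝ) >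
      max (Real.log (ε / (2 * ((m : ℝ) - 2))) / (2 * Real.log (((m : ℝ) - 2) / ((m : ℝ) - 1))))
        (Real.log ((2 - ε) / 4) / Real.log (1 - 1 / ((m : ℝ) - 1) ^ 2))) :
    ∀ l : ℕ, r ≤ l →
      (∃ L' : Fin 2 ⊕ Fin l → Finset ℕ, IsBalanced m L' ∧
        numListColorings (K2l l) L' < chromPoly (K2l l) m) ∧
      listColorFunction (K2l l) m < chromPoly (K2l l) m ∧
      m < lcfThreshold (K2l l) := by
  obtain ⟨n, rfl⟩ : ∃ n, m = n + 2 := ⟨m - 2, by omega⟩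
  intro l hl
  have c1 : (((n + 2 : ℕ) : ℝ) - 2) = n := by push_cast; ring
  have c2 : (((n + 2 : ℕ) : ℝ) - 1) = n + 1 := by push_cast; ring
  rw [c1, c2, gt_iff_lt, max_lt_iff] at hr
  have hc := cond_of n (r / 4) (by omega) ε hε hr.1 hr.2
  have hx : (0 : ℝ) ≤ n := by positivity
  obtain ⟨τ, rfl⟩ := of_bal n r L hbal
  have hE := num_MM n r τ (fun i => zCount (MM n τ) (n + 2) i) (z_MM n r τ)
  obtain ⟨-, -, -, hs, hz⟩ := hbal
  rw [Fin.sum_univ_four] at hs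
  have hz' : ∀ i j, zCount (MM n τ) (n + 2) i ≤ zCount (MM n τ) (n + 2) j + 1 := by
    intro i j
    have := (abs_le.1 (hz i j)).2
    omega
  have hle := EE_le n hx (r / 4) (r % 4) (Nat.mod_lt _ (by norm_num)) _ _ _ _
    (by rw [hs]; omega : _ = 4 * (r / 4) + r % 4)
    (by have := hz' 0 1; have := hz' 0 2; have := hz' 0 3; have := hz' 1 0; have := hz' 2 0
        have := hz' 3 0; omega)
    (by have := hz' 1 0; have := hz' 1 2; have := hz' 1 3; have := hz' 0 1; have := hz' 2 1
        have := hz' 3 1; omega)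
    (by have := hz' 2 1; have := hz' 2 0; have := hz' 2 3; have := hz' 1 2; have := hz' 0 2
        have := hz' 3 2; omega)
    (by have := hz' 3 1; have := hz' 3 2; have := hz' 3 0; have := hz' 1 3; have := hz' 2 3
        have := hz' 0 3; omega)
  rw [Nat.div_add_mod] at hle
  have hlt' : (numListColorings (K2l r) (MM n τ) : ℝ) < chromPoly (K2l r) (n + 2) := by
    exact_mod_cast hlt
  have hpos : 0 < CC n r := by linarith
  have hposl := CC_mono n hx r l hl hc hpos
  have hE' := num_MM n l (tc l) _ (fun i => (tc_count l i).symm)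
  have hfin : numListColorings (K2l l) (MM n (tc l)) < chromPoly (K2l l) (n + 2) := by
    have : (numListColorings (K2l l) (MM n (tc l)) : ℝ) < chromPoly (K2l l) (n + 2) := by
      rw [← sub_pos, hE']
      exact hposl
    exact_mod_cast this
  have hlcf : listColorFunction (K2l l) (n + 2) < chromPoly (K2l l) (n + 2) :=
    lt_of_le_of_lt (Nat.sInf_le ⟨_, (bal_tc n l).1, rfl⟩) hfin
  exact ⟨⟨_, bal_tc n l, hfin⟩, hlcf, thr l (n + 2) hlcf⟩
end
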